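/- Let θ : ℝⁿ → [−∞,+∞] be symmetric and locally Lipschitz continuous relative to its domain, let g = θ∘λ be lower semicontinuous, let (X,Y) ∈ gph ∂g, and assume g is prox-regular and subdifferentially continuous at X. Let y ∈ ∂θ(λ(X)) and U ∈ Oⁿ(X) be such that Y = U·Diag(y)·Uᵀ. Then the set-valued subgradient map ∂g is proto-differentiable at X for Y if and only if ∂θ is proto-differentiable at λ(X) for y. -/

import Mathlib

open Filter Topology Matrix

noncomputable section

namespace SpecPaper

/-! ## Generic variational analysis definitions over a topological real vector space -/

variable {E : Type*}

section Generic

variable [AddCommGroup E] [Module ℝ E] [TopologicalSpace E]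

/-- `f x` is finite (neither `+∞` nor `-∞`). -/
def IsFiniteAt (f : E → EReal) (x : E) : Prop :=
  f x ≠ ⊤ ∧ f x ≠ ⊥

/-- The norm induced by a given inner product. -/
noncomputable def nrm (ip : E → E → ℝ) (x : E) : ℝ :=
  Real.sqrt (ip x x)

/-- The subderivative `df(x)(w)`. -/
noncomputable def subderiv (f : E → EReal) (x w : E) : EReal :=
  Filter.liminf (fun p : ℝ × E => (((p.1)⁻¹ : ℝ) : EReal) * (f (x + p.1 • p.2) - f x))
    ((nhdsWithin (0 : ℝ) (Set.Ioi 0)) ×ˢ nhds w)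

/-- The second-order difference quotient `Δ²ₜ f(x,v)(w)`. -/
noncomputable def sdq2 (ip : E → E → ℝ) (f : E → EReal) (x v : E) (t : ℝ) (w : E) : EReal :=
  (((2 / t ^ 2) : ℝ) : EReal) * (f (x + t • w) - f x - ((t * ip v w : ℝ) : EReal))

/-- The second subderivative `d²f(x,v)(w)`. -/
noncomputable def subderiv2 (ip : E → E → ℝ) (f : E → EReal) (x v w : E) : EReal :=
  Filter.liminf (fun p : ℝ × E => sdq2 ip f x v p.1 p.2)
    ((nhdsWithin (0 : ℝ) (Set.Ioi 0)) ×ˢ nhds w)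

/-- Twice epi-differentiability of `f` at `x` for `v`. -/
def TwiceEpiDiff (ip : E → E → ℝ) (f : E → EReal) (x v : E) : Prop :=
  IsFiniteAt f x ∧
    ∀ t : ℕ → ℝ, (∀ k, 0 < t k) → Tendsto t atTop (nhds 0) →
      ∀ w : E, ∃ ws : ℕ → E, Tendsto ws atTop (nhds w) ∧
        Tendsto (fun k => sdq2 ip f x v (t k) (ws k)) atTop (nhds (subderiv2 ip f x v w))

/-- `v` is a regular subgradient of `f` at `x`. -/
def RegSubgrad (ip : E → E → ℝ) (f : E → EReal) (x v : E) : Prop :=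
  IsFiniteAt f x ∧
    (0 : EReal) ≤ Filter.liminf
      (fun y : E =>
        (((nrm ip (y - x))⁻¹ : ℝ) : EReal) * (f y - f x - ((ip v (y - x) : ℝ) : EReal)))
      (nhdsWithin x {x}ᶜ)

/-- `v` is a (limiting) subgradient of `f` at `x`. -/
def LimSubgrad (ip : E → E → ℝ) (f : E → EReal) (x v : E) : Prop :=
  ∃ xs vs : ℕ → E, (∀ k, RegSubgrad ip f (xs k) (vs k)) ∧
    Tendsto xs atTop (nhds x) ∧ Tendsto vs atTop (nhds v) ∧
    Tendsto (fun k => f (xs k)) atTop (nhds (f x))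

/-- The tangent cone to `C` at `x`. -/
def tangentCone (C : Set E) (x : E) : Set E :=
  {w | ∃ (t : ℕ → ℝ) (ws : ℕ → E), (∀ k, 0 < t k) ∧ Tendsto t atTop (nhds 0) ∧
    Tendsto ws atTop (nhds w) ∧ ∀ k, x + t k • ws k ∈ C}

/-- The regular normal cone to `C` at `x`. -/
def regNormalCone (ip : E → E → ℝ) (C : Set E) (x : E) : Set E :=
  {v | ∀ w ∈ tangentCone C x, ip v w ≤ 0}

/-- The limiting normal cone to `C` at `x`. -/
def limNormalCone (ip : E → E → ℝ) (C : Set E) (x : E) : Set E :=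
  {v | ∃ xs vs : ℕ → E, (∀ k, xs k ∈ C) ∧ (∀ k, vs k ∈ regNormalCone ip C (xs k)) ∧
    Tendsto xs atTop (nhds x) ∧ Tendsto vs atTop (nhds v)}

/-- The critical cone `C_f(x,v)`. -/
def criticalCone (ip : E → E → ℝ) (f : E → EReal) (x v : E) : Set E :=
  {w | subderiv f x w = ((ip v w : ℝ) : EReal)}

/-- `f` is locally Lipschitz continuous at `x` relative to its domain. -/
def LocLipAtRelDom (ip : E → E → ℝ) (f : E → EReal) (x : E) : Prop :=
  IsFiniteAt f x ∧
    ∃ V ∈ nhds x, ∃ ℓ : ℝ, 0 ≤ ℓ ∧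
      ∀ a ∈ V, ∀ b ∈ V, f a ≠ ⊤ → f b ≠ ⊤ →
        f a ≠ ⊥ ∧ f b ≠ ⊥ ∧ |(f a).toReal - (f b).toReal| ≤ ℓ * nrm ip (a - b)

/-- `f` is locally Lipschitz continuous relative to its domain. -/
def LocLipRelDom (ip : E → E → ℝ) (f : E → EReal) : Prop :=
  ∀ x : E, f x ≠ ⊤ → LocLipAtRelDom ip f x

/-- `v` is a proximal subgradient of `f` at `x`. -/
def ProxSubgrad (ip : E → E → ℝ) (f : E → EReal) (x v : E) : Prop :=
  IsFiniteAt f x ∧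
    ∃ r > (0 : ℝ), ∃ ε > (0 : ℝ), ∀ x' : E, nrm ip (x' - x) ≤ ε →
      f x + ((ip v (x' - x) - r / 2 * ip (x' - x) (x' - x) : ℝ) : EReal) ≤ f x'

/-- `f` is prox-regular at `x` for `v`. -/
def ProxRegularAtFor (ip : E → E → ℝ) (f : E → EReal) (x v : E) : Prop :=
  IsFiniteAt f x ∧
    (∃ δ > (0 : ℝ), LowerSemicontinuousOn f {x' | nrm ip (x' - x) < δ}) ∧
    ∃ ε > (0 : ℝ), ∃ r : ℝ, 0 ≤ r ∧
      ∀ x₁ v₁ : E, LimSubgrad ip f x₁ v₁ → nrm ip (x₁ - x) < ε → nrm ip (v₁ - v) < ε →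
        f x₁ < f x + (ε : EReal) →
        ∀ x' : E, nrm ip (x' - x) < ε →
          f x₁ + ((ip v₁ (x' - x₁) - r / 2 * ip (x' - x₁) (x' - x₁) : ℝ) : EReal) ≤ f x'

/-- `f` is prox-regular at `x` (for every subgradient). -/
def ProxRegularAt (ip : E → E → ℝ) (f : E → EReal) (x : E) : Prop :=
  ∀ v : E, LimSubgrad ip f x v → ProxRegularAtFor ip f x v

/-- `f` is subdifferentially continuous at `x`. -/
def SubdiffContAt (ip : E → E → ℝ) (f : E → EReal) (x : E) : Prop :=
  ∀ v : E, LimSubgrad ip f x v →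
    ∀ xs vs : ℕ → E, (∀ k, LimSubgrad ip f (xs k) (vs k)) →
      Tendsto xs atTop (nhds x) → Tendsto vs atTop (nhds v) →
      Tendsto (fun k => f (xs k)) atTop (nhds (f x))

/-- `f` is prox-bounded. -/
def ProxBounded (ip : E → E → ℝ) (f : E → EReal) : Prop :=
  ∃ α c : ℝ, ∀ x : E, (c : EReal) ≤ f x + ((α * ip x x : ℝ) : EReal)

/-- The proximal mapping (as a set of minimizers). -/
def proxSet (ip : E → E → ℝ) (f : E → EReal) (γ : ℝ) (x : E) : Set E :=
  {w | ∀ w' : E,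
    f w + ((1 / (2 * γ) * ip (w - x) (w - x) : ℝ) : EReal) ≤
      f w' + ((1 / (2 * γ) * ip (w' - x) (w' - x) : ℝ) : EReal)}

/-- The proximal map of `f` with parameter `γ` is single-valued around `z` and the resulting
map is directionally differentiable at `z`. -/
def ProxSingleDirDiff (ip : E → E → ℝ) (f : E → EReal) (γ : ℝ) (z : E) : Prop :=
  ∃ V ∈ nhds z, ∃ P : E → E, (∀ u ∈ V, proxSet ip f γ u = {P u}) ∧
    ∀ h : E, ∃ L : E,
      Tendsto (fun t : ℝ => t⁻¹ • (P (z + t • h) - P z)) (nhdsWithin 0 (Set.Ioi 0)) (nhds L)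

/-- The parabolic difference quotient. -/
noncomputable def parabQuot (f : E → EReal) (x w : E) (t : ℝ) (z : E) : EReal :=
  (((2 / t ^ 2) : ℝ) : EReal) *
    (f (x + t • w + (t ^ 2 / 2) • z) - f x - ((t * (subderiv f x w).toReal : ℝ) : EReal))

/-- The parabolic subderivative `d²f(x)(w | z)`. -/
noncomputable def parabSubderiv (f : E → EReal) (x w z : E) : EReal :=
  Filter.liminf (fun p : ℝ × E => parabQuot f x w p.1 p.2)
    ((nhdsWithin (0 : ℝ) (Set.Ioi 0)) ×ˢ nhds z)

/-- `f` is parabolically epi-differentiable at `x` for `w`. -/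
def ParabEpiDiff (f : E → EReal) (x w : E) : Prop :=
  (∃ z : E, parabSubderiv f x w z < ⊤) ∧
    ∀ t : ℕ → ℝ, (∀ k, 0 < t k) → Tendsto t atTop (nhds 0) →
      ∀ z : E, ∃ zs : ℕ → E, Tendsto zs atTop (nhds z) ∧
        Tendsto (fun k => parabQuot f x w (t k) (zs k)) atTop (nhds (parabSubderiv f x w z))

/-- `φ` is a generalized quadratic form: its domain is a linear subspace and on the domain it is
given by a symmetric linear operator. -/
def IsGQF (ip : E → E → ℝ) (φ : E → EReal) : Prop :=
  (φ 0 ≠ ⊤) ∧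
  (∀ x y : E, φ x ≠ ⊤ → φ y ≠ ⊤ → φ (x + y) ≠ ⊤) ∧
  (∀ (c : ℝ) (x : E), φ x ≠ ⊤ → φ (c • x) ≠ ⊤) ∧
  ∃ L : E → E,
    (∀ x y : E, φ x ≠ ⊤ → φ y ≠ ⊤ → L (x + y) = L x + L y) ∧
    (∀ (c : ℝ) (x : E), φ x ≠ ⊤ → L (c • x) = c • L x) ∧
    (∀ x y : E, φ x ≠ ⊤ → φ y ≠ ⊤ → ip (L x) y = ip x (L y)) ∧
    (∀ x : E, φ x ≠ ⊤ → φ x = ((ip (L x) x : ℝ) : EReal))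

/-- `f` is generalized twice differentiable at `x` for `v`. -/
def GenTwiceDiff (ip : E → E → ℝ) (f : E → EReal) (x v : E) : Prop :=
  TwiceEpiDiff ip f x v ∧ IsGQF ip (subderiv2 ip f x v)

/-- Proto-differentiability of a set-valued map `F` at `x` for `y ∈ F x`. -/
def ProtoDiff (F : E → Set E) (x y : E) : Prop :=
  ∀ w η : E, (w, η) ∈ tangentCone {p : E × E | p.2 ∈ F p.1} (x, y) →
    ∀ t : ℕ → ℝ, (∀ k, 0 < t k) → Tendsto t atTop (nhds 0) →
      ∃ ws ηs : ℕ → E, Tendsto ws atTop (nhds w) ∧ Tendsto ηs atTop (nhds η) ∧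
        ∀ k, y + t k • ηs k ∈ F (x + t k • ws k)

/-- Relative interior of a set (interior relative to its affine hull). -/
def relInterior (C : Set E) : Set E :=
  {y | y ∈ C ∧ ∃ V ∈ nhds y, ∀ z ∈ V, z ∈ affineSpan ℝ C → z ∈ C}

/-- A polyhedral set: the intersection of finitely many closed half-spaces. -/
def IsPolyhedral (ip : E → E → ℝ) (C : Set E) : Prop :=
  ∃ (k : ℕ) (a : Fin k → E) (b : Fin k → ℝ), C = {x | ∀ j : Fin k, ip (a j) x ≤ b j}

/-- The subdifferential of a convex function. -/
def convexSubdiff (ip : E → E → ℝ) (f : E → EReal) (x : E) : Set E :=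
  {v | ∀ z : E, f x + ((ip v (z - x) : ℝ) : EReal) ≤ f z}

/-- The natural inner product on `E × ℝ`. -/
def ipProd (ip : E → E → ℝ) : E × ℝ → E × ℝ → ℝ :=
  fun p q => ip p.1 q.1 + p.2 * q.2

/-- The epigraph of `f`. -/
def epiSet (f : E → EReal) : Set (E × ℝ) :=
  {p | f p.1 ≤ (p.2 : EReal)}

/-- `f` is subdifferentially regular at `x`. -/
def SubdiffRegularAt (ip : E → E → ℝ) (f : E → EReal) (x : E) : Prop :=
  IsFiniteAt f x ∧
    regNormalCone (ipProd ip) (epiSet f) (x, (f x).toReal) =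
      limNormalCone (ipProd ip) (epiSet f) (x, (f x).toReal)

/-! Real-valued versions: semidifferentiability, gradients. -/

/-- `f` is semidifferentiable at `x`. -/
def SemiDiffAt (f : E → ℝ) (x : E) : Prop :=
  ∀ w : E, ∃ d : ℝ,
    Tendsto (fun p : ℝ × E => (p.1)⁻¹ * (f (x + p.1 • p.2) - f x))
      ((nhdsWithin (0 : ℝ) (Set.Ioi 0)) ×ˢ nhds w) (nhds d)

/-- The (real value of the) subderivative of a real-valued function. -/
noncomputable def dReal (f : E → ℝ) (x w : E) : ℝ :=
  (subderiv (fun y => ((f y : ℝ) : EReal)) x w).toReal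

/-- The second-order difference quotient built from the subderivative. -/
noncomputable def sdq2R (f : E → ℝ) (x : E) (t : ℝ) (w : E) : ℝ :=
  (2 / t ^ 2) * (f (x + t • w) - f x - t * dReal f x w)

/-- `f` is twice semidifferentiable at `x`. -/
def TwiceSemiDiffAt (f : E → ℝ) (x : E) : Prop :=
  SemiDiffAt f x ∧
    ∀ w : E, ∃ d : ℝ,
      Tendsto (fun p : ℝ × E => sdq2R f x p.1 p.2)
        ((nhdsWithin (0 : ℝ) (Set.Ioi 0)) ×ˢ nhds w) (nhds d)

/-- The second semiderivative `d²f(x)(w)` (the liminf; it is the full limit whenever `f` is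
twice semidifferentiable at `x`). -/
noncomputable def secondSemiDeriv (f : E → ℝ) (x w : E) : EReal :=
  Filter.liminf (fun p : ℝ × E => ((sdq2R f x p.1 p.2 : ℝ) : EReal))
    ((nhdsWithin (0 : ℝ) (Set.Ioi 0)) ×ˢ nhds w)

/-- `f` is (Fréchet) differentiable at `x` with gradient `g` (w.r.t. inner product `ip`). -/
def HasGradAt (ip : E → E → ℝ) (f : E → ℝ) (x g : E) : Prop :=
  Tendsto (fun y : E => (nrm ip (y - x))⁻¹ * (f y - f x - ip g (y - x)))
    (nhdsWithin x {x}ᶜ) (nhds 0)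

/-- `f` is locally Lipschitz continuous around `x`. -/
def LocLipAt (ip : E → E → ℝ) (f : E → ℝ) (x : E) : Prop :=
  ∃ V ∈ nhds x, ∃ ℓ : ℝ, 0 ≤ ℓ ∧ ∀ a ∈ V, ∀ b ∈ V, |f a - f b| ≤ ℓ * nrm ip (a - b)

/-- `f` is twice differentiable at `x` with gradient map `G` near `x` and second derivative
(the derivative of `G` at `x`) given by the linear map `Dxx`. -/
def HasSecondDerivAt (ip : E → E → ℝ) (f : E → EReal) (x : E) (G : E → E) (Dxx : E → E) :
    Prop :=
  ∃ V ∈ nhds x, ∃ fr : E → ℝ,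
    (∀ z ∈ V, f z = ((fr z : ℝ) : EReal)) ∧
    (∀ z ∈ V, HasGradAt ip fr z (G z)) ∧
    IsLinearMap ℝ Dxx ∧
    Tendsto (fun z : E => (nrm ip (z - x))⁻¹ • (G z - G x - Dxx (z - x)))
      (nhdsWithin x {x}ᶜ) (nhds 0)

/-- `f` is twice differentiable at `x`. -/
def TwiceDiffAt (ip : E → E → ℝ) (f : E → EReal) (x : E) : Prop :=
  ∃ G Dxx : E → E, HasSecondDerivAt ip f x G Dxx

end Generic

/-! ## Eigenvalues and spectral machinery -/

open scoped Classical in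
/-- The eigenvalues of a real symmetric matrix, arranged in nonincreasing order
(junk value `0` if the matrix is not symmetric). -/
noncomputable def eigval {n : ℕ} (X : Matrix (Fin n) (Fin n) ℝ) : Fin n → ℝ :=
  if h : X.IsHermitian then
    fun i => h.eigenvalues (Tuple.sort (fun j => -h.eigenvalues j) i)
  else 0

/-- `Oⁿ(X)`: orthogonal matrices realizing the ordered spectral decomposition of `X`. -/
def eigOrth {n : ℕ} (X : Matrix (Fin n) (Fin n) ℝ) : Set (Matrix (Fin n) (Fin n) ℝ) :=
  {U | U * Uᵀ = 1 ∧ X = U * Matrix.diagonal (eigval X) * Uᵀ}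

open scoped Classical in
/-- The block `α_m` of indices `j` whose eigenvalue `λ_j(X)` equals `λ_i(X)`. -/
noncomputable def blockSet {n : ℕ} (X : Matrix (Fin n) (Fin n) ℝ) (i : Fin n) :
    Finset (Fin n) :=
  Finset.univ.filter fun j => eigval X j = eigval X i

lemma mem_blockSet_self {n : ℕ} (X : Matrix (Fin n) (Fin n) ℝ) (i : Fin n) :
    i ∈ blockSet X i := by
  simp [blockSet]

/-- The increasing enumeration of the block of `i`. -/
noncomputable def blockEmb {n : ℕ} (X : Matrix (Fin n) (Fin n) ℝ) (i : Fin n) :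
    Fin (blockSet X i).card → Fin n :=
  fun a => ((blockSet X i).orderIsoOfFin rfl a : Fin n)

/-- The position of `i` inside its own block. -/
noncomputable def blockIdx {n : ℕ} (X : Matrix (Fin n) (Fin n) ℝ) (i : Fin n) :
    Fin (blockSet X i).card :=
  ((blockSet X i).orderIsoOfFin rfl).symm ⟨i, mem_blockSet_self X i⟩

/-- The principal submatrix of `M` corresponding to the block of `i` (for `X`). -/
noncomputable def blockMat {n : ℕ} (X M : Matrix (Fin n) (Fin n) ℝ) (i : Fin n) :
    Matrix (Fin (blockSet X i).card) (Fin (blockSet X i).card) ℝ :=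
  Matrix.of fun a b => M (blockEmb X i a) (blockEmb X i b)

/-- The directional derivative `λ'(X;H)` of the ordered eigenvalue map, computed through
`U ∈ Oⁿ(X)`: blockwise ordered eigenvalues of `U_{α_m}ᵀ H U_{α_m}`. -/
noncomputable def lambdaDir {n : ℕ} (X U H : Matrix (Fin n) (Fin n) ℝ) : Fin n → ℝ :=
  fun i => eigval (blockMat X (Uᵀ * H * U) i) (blockIdx X i)

open scoped Classical in
/-- The Moore–Penrose pseudoinverse of a square real matrix, characterized by the four
Penrose equations. -/
noncomputable def pinv {n : ℕ} (A : Matrix (Fin n) (Fin n) ℝ) :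
    Matrix (Fin n) (Fin n) ℝ :=
  if h : ∃ B : Matrix (Fin n) (Fin n) ℝ,
      A * B * A = A ∧ B * A * B = B ∧ (A * B)ᵀ = A * B ∧ (B * A)ᵀ = B * A
  then h.choose else 0

/-- The curvature term `2 ∑ₘ ⟨Diag(y)_{αₘαₘ}, U_{αₘ}ᵀ H (μₘ I - X)† H U_{αₘ}⟩`, written as a
single sum over all indices. -/
noncomputable def curvTerm {n : ℕ} (X U H : Matrix (Fin n) (Fin n) ℝ) (y : Fin n → ℝ) : ℝ :=
  2 * ∑ i : Fin n, y i *
    (Uᵀ * (H * pinv (eigval X i • (1 : Matrix (Fin n) (Fin n) ℝ) - X) * H) * U) i i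

/-- Two symmetric matrices admit a simultaneous ordered spectral decomposition. -/
def simOrdSpec {k : ℕ} (A B : Matrix (Fin k) (Fin k) ℝ) : Prop :=
  ∃ P : Matrix (Fin k) (Fin k) ℝ, P * Pᵀ = 1 ∧
    A = P * Matrix.diagonal (eigval A) * Pᵀ ∧
    B = P * Matrix.diagonal (eigval B) * Pᵀ

/-- The subspace of symmetric `n × n` real matrices. -/
def symSubmodule (n : ℕ) : Submodule ℝ (Matrix (Fin n) (Fin n) ℝ) where
  carrier := {A | A.IsSymm}
  add_mem' := by
    intro a b ha hb
    simp only [Set.mem_setOf_eq, Matrix.IsSymm] at *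
    rw [Matrix.transpose_add, ha, hb]
  zero_mem' := by
    simp only [Set.mem_setOf_eq, Matrix.IsSymm, Matrix.transpose_zero]
  smul_mem' := by
    intro c a ha
    simp only [Set.mem_setOf_eq, Matrix.IsSymm] at *
    rw [Matrix.transpose_smul, ha]

/-- The space `Sⁿ` of symmetric `n × n` real matrices. -/
abbrev Sym (n : ℕ) : Type := ↥(symSubmodule n)

/-- The trace inner product `⟨A, B⟩ = tr(AB)` on `Sⁿ`. -/
noncomputable def ipM {n : ℕ} (A B : Sym n) : ℝ :=
  ((A : Matrix (Fin n) (Fin n) ℝ) * (B : Matrix (Fin n) (Fin n) ℝ)).trace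

/-- The Euclidean inner product on `ℝⁿ`. -/
def ipV {n : ℕ} (v w : Fin n → ℝ) : ℝ :=
  ∑ i, v i * w i

/-- The spectral function `g = θ ∘ λ` on `Sⁿ`. -/
noncomputable def specFn {n : ℕ} (θ : (Fin n → ℝ) → EReal) : Sym n → EReal :=
  fun A => θ (eigval (A : Matrix (Fin n) (Fin n) ℝ))

/-- A function on `ℝⁿ` is symmetric (permutation invariant). -/
def SymmetricFn {n : ℕ} {α : Type*} (θ : (Fin n → ℝ) → α) : Prop :=
  ∀ (x : Fin n → ℝ) (σ : Equiv.Perm (Fin n)), θ (fun i => x (σ i)) = θ x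

/-- The diagonal matrix `Diag(w)` as an element of `Sⁿ`. -/
noncomputable def diagSym {n : ℕ} (w : Fin n → ℝ) : Sym n :=
  ⟨Matrix.diagonal w, Matrix.isSymm_diagonal w⟩

/-- The `i`-th order statistic: `orderStat x i` is the `i`-th largest entry of `x`. -/
noncomputable def orderStat {n : ℕ} (x : Fin n → ℝ) : Fin n → ℝ :=
  fun i => x (Tuple.sort (fun j => -x j) i)


/-! ### Part 1: linear algebra -/

lemma orth_comm {n : ℕ} {U : Matrix (Fin n) (Fin n) ℝ} (hU : U * Uᵀ = 1) : Uᵀ * U = 1 :=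
  mul_eq_one_comm.mp hU

/-- The symmetric matrix `U Diag(x) Uᵀ`. -/
def cjD {n : ℕ} (U : Matrix (Fin n) (Fin n) ℝ) (x : Fin n → ℝ) : Sym n :=
  ⟨U * Matrix.diagonal x * Uᵀ, by
    change (U * Matrix.diagonal x * Uᵀ)ᵀ = _
    rw [Matrix.transpose_mul, Matrix.transpose_mul, Matrix.transpose_transpose,
      Matrix.diagonal_transpose, Matrix.mul_assoc]⟩

@[simp] lemma cjD_val {n : ℕ} (U : Matrix (Fin n) (Fin n) ℝ) (x : Fin n → ℝ) :
    (cjD U x : Matrix (Fin n) (Fin n) ℝ) = U * Matrix.diagonal x * Uᵀ := rfl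

lemma perm_of_det_ne {n : ℕ} {R : Matrix (Fin n) (Fin n) ℝ} (hR : R.det ≠ 0) :
    ∃ σ : Equiv.Perm (Fin n), ∀ j, R (σ j) j ≠ 0 := by
  rw [Matrix.det_apply] at hR
  obtain ⟨σ, -, hσ⟩ := Finset.exists_ne_zero_of_sum_ne_zero hR
  refine ⟨σ, fun j hj => hσ ?_⟩
  rw [Finset.prod_eq_zero (f := fun i => R (σ i) i) (Finset.mem_univ j) hj, smul_zero]

lemma orth_det_ne {n : ℕ} {R : Matrix (Fin n) (Fin n) ℝ} (hR : R * Rᵀ = 1) : R.det ≠ 0 := by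
  intro h
  have := congrArg Matrix.det hR
  rw [Matrix.det_mul, h, zero_mul, Matrix.det_one] at this
  exact zero_ne_one this

/-- If `Diag a * R = R * Diag b`, nonzero entries of `R` link equal entries. -/
lemma entry_eq {n : ℕ} {R : Matrix (Fin n) (Fin n) ℝ} {a b : Fin n → ℝ}
    (h : Matrix.diagonal a * R = R * Matrix.diagonal b) {i j : Fin n} (hij : R i j ≠ 0) :
    a i = b j := by
  have := congrFun (congrFun h i) j
  rw [Matrix.diagonal_mul, Matrix.mul_diagonal, mul_comm] at this
  exact mul_left_cancel₀ hij this

lemma orth_mul {n : ℕ} {P Q : Matrix (Fin n) (Fin n) ℝ} (hP : P * Pᵀ = 1) (hQ : Q * Qᵀ = 1) :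
    (P * Q) * (P * Q)ᵀ = 1 := by
  rw [Matrix.transpose_mul, Matrix.mul_assoc, ← Matrix.mul_assoc Q, hQ, Matrix.one_mul, hP]

lemma orth_transpose {n : ℕ} {P : Matrix (Fin n) (Fin n) ℝ} (hP : P * Pᵀ = 1) :
    Pᵀ * Pᵀᵀ = 1 := by
  rw [Matrix.transpose_transpose]; exact orth_comm hP

/-- Intertwining relation from two diagonalizations. -/
lemma intertwine {n : ℕ} {U V : Matrix (Fin n) (Fin n) ℝ} {a b : Fin n → ℝ}
    (hU : U * Uᵀ = 1) (hV : V * Vᵀ = 1)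
    (h : U * Matrix.diagonal a * Uᵀ = V * Matrix.diagonal b * Vᵀ) :
    Matrix.diagonal a * (Uᵀ * V) = (Uᵀ * V) * Matrix.diagonal b := by
  have h1 := congrArg (fun M => Uᵀ * M * V) h
  calc Matrix.diagonal a * (Uᵀ * V) = (Uᵀ * U) * Matrix.diagonal a * (Uᵀ * V) := by
        rw [orth_comm hU, Matrix.one_mul]
    _ = Uᵀ * (U * Matrix.diagonal a * Uᵀ) * V := by simp only [Matrix.mul_assoc]
    _ = Uᵀ * (V * Matrix.diagonal b * Vᵀ) * V := h1
    _ = (Uᵀ * V) * Matrix.diagonal b * (Vᵀ * V) := by simp only [Matrix.mul_assoc]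
    _ = _ := by rw [orth_comm hV, Matrix.mul_one]

lemma spectral_exists {n : ℕ} {A : Matrix (Fin n) (Fin n) ℝ} (hA : A.IsHermitian) :
    ∃ P : Matrix (Fin n) (Fin n) ℝ, P * Pᵀ = 1 ∧
      A = P * Matrix.diagonal hA.eigenvalues * Pᵀ := by
  refine ⟨(hA.eigenvectorUnitary : Matrix (Fin n) (Fin n) ℝ), ?_, ?_⟩
  · have := Unitary.coe_mul_star_self hA.eigenvectorUnitary
    rwa [Unitary.coe_star, Matrix.star_eq_conjTranspose, Matrix.conjTranspose_eq_transpose_of_trivial] at this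
  · have := hA.spectral_theorem
    rw [Unitary.conjStarAlgAut_apply, Matrix.star_eq_conjTranspose,
      Matrix.conjTranspose_eq_transpose_of_trivial] at this
    exact this

lemma sym_herm {n : ℕ} (A : Sym n) : (A : Matrix (Fin n) (Fin n) ℝ).IsHermitian := by
  have h : (A : Matrix (Fin n) (Fin n) ℝ)ᵀ = A := A.2
  rw [Matrix.IsHermitian, Matrix.conjTranspose_eq_transpose_of_trivial, h]

lemma eigval_perm {n : ℕ} {U : Matrix (Fin n) (Fin n) ℝ} (hU : U * Uᵀ = 1) (x : Fin n → ℝ) :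
    ∃ σ : Equiv.Perm (Fin n),
      eigval (cjD U x : Matrix (Fin n) (Fin n) ℝ) = fun i => x (σ i) := by
  set A := cjD U x with hAdef
  have hA := sym_herm A
  obtain ⟨P, hP, hPA⟩ := spectral_exists hA
  have h := intertwine (a := x) (b := hA.eigenvalues) hU hP (by rw [← hPA]; rfl)
  obtain ⟨σ, hσ⟩ := perm_of_det_ne (orth_det_ne (orth_mul (orth_transpose hU) hP))
  refine ⟨(Tuple.sort (fun j => -hA.eigenvalues j)).trans σ, ?_⟩
  funext i
  rw [eigval, dif_pos hA]
  exact (entry_eq h (hσ _)).symm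

lemma specFn_cjD {n : ℕ} {θ : (Fin n → ℝ) → EReal} (hsym : SymmetricFn θ)
    {U : Matrix (Fin n) (Fin n) ℝ} (hU : U * Uᵀ = 1) (x : Fin n → ℝ) :
    specFn θ (cjD U x) = θ x := by
  obtain ⟨σ, hσ⟩ := eigval_perm hU x
  rw [specFn, hσ, hsym]

lemma sym_exists_cjD {n : ℕ} (A : Sym n) :
    ∃ (P : Matrix (Fin n) (Fin n) ℝ) (z : Fin n → ℝ), P * Pᵀ = 1 ∧ A = cjD P z := by
  obtain ⟨P, hP, h⟩ := spectral_exists (sym_herm A)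
  exact ⟨P, _, hP, Subtype.ext h⟩

/-- Simultaneous diagonalization of two commuting symmetric matrices. -/
lemma simul_diag {n : ℕ} (A B : Sym n)
    (hAB : (A : Matrix (Fin n) (Fin n) ℝ) * (B : Matrix (Fin n) (Fin n) ℝ)
      = (B : Matrix (Fin n) (Fin n) ℝ) * (A : Matrix (Fin n) (Fin n) ℝ)) :
    ∃ (P : Matrix (Fin n) (Fin n) ℝ) (a b : Fin n → ℝ), P * Pᵀ = 1 ∧ A = cjD P a ∧
      B = cjD P b := by
  classical
  set TA := Matrix.toEuclideanLin (A : Matrix (Fin n) (Fin n) ℝ) with hTA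
  set TB := Matrix.toEuclideanLin (B : Matrix (Fin n) (Fin n) ℝ) with hTB
  have hA : TA.IsSymmetric := Matrix.isSymmetric_toEuclideanLin_iff.mpr (sym_herm A)
  have hB : TB.IsSymmetric := Matrix.isSymmetric_toEuclideanLin_iff.mpr (sym_herm B)
  have hc : Commute TA TB := by
    change TA * TB = TB * TA
    apply LinearMap.ext
    intro v
    apply (WithLp.ofLp_injective 2)
    simp [TA, TB, Matrix.toLpLin_apply, Matrix.mulVec_mulVec, hAB]
  have hI := LinearMap.IsSymmetric.directSum_isInternal_of_commute hA hB hc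
  have hO := LinearMap.IsSymmetric.orthogonalFamily_eigenspace_inf_eigenspace hA hB
  have hI' := (DirectSum.isInternal_ne_bot_iff).mpr hI
  have := (hI.submodule_iSupIndep).fintypeNeBotOfFiniteDimensional
  have hO' := hO.comp (Subtype.val_injective (p := fun i : ℝ × ℝ =>
    (Module.End.eigenspace TA i.2 ⊓ Module.End.eigenspace TB i.1) ≠ ⊥))
  have hn : Module.finrank ℝ (EuclideanSpace ℝ (Fin n)) = n := by simp
  set b := hI'.subordinateOrthonormalBasis hn hO' with hb
  have hmem := fun a => hI'.subordinateOrthonormalBasis_subordinate hn a hO'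
  set idx := fun a => hI'.subordinateOrthonormalBasisIndex hn a hO'
  let P : Matrix (Fin n) (Fin n) ℝ := Matrix.of fun i j => b j i
  have hPP : Pᵀ * P = 1 := by
    ext i j
    have := orthonormal_iff_ite.mp b.orthonormal i j
    rw [Matrix.mul_apply, Matrix.one_apply, ← this, PiLp.inner_apply]
    simp [P, mul_comm]
  have key : ∀ (T : Sym n) (c : Fin n → ℝ),
      (∀ j, Matrix.toEuclideanLin (T : Matrix (Fin n) (Fin n) ℝ) (b j) = c j • b j) →
      T = cjD P c := by
    intro T c h
    apply Subtype.ext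
    have hTP : (T : Matrix (Fin n) (Fin n) ℝ) * P = P * Matrix.diagonal c := by
      ext i j
      have := congrArg (fun v : EuclideanSpace ℝ (Fin n) => v i) (h j)
      simp only [Matrix.toLpLin_apply, Matrix.mulVec, dotProduct, PiLp.smul_apply,
        smul_eq_mul] at this
      rw [Matrix.mul_apply, Matrix.mul_diagonal]
      simp only [P, Matrix.of_apply]
      rw [this, mul_comm]
    rw [cjD_val, ← hTP, Matrix.mul_assoc, mul_eq_one_comm.mp hPP, Matrix.mul_one]
  refine ⟨P, fun j => (idx j).1.2, fun j => (idx j).1.1, mul_eq_one_comm.mp hPP,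
    key A _ fun j => ?_, key B _ fun j => ?_⟩
  · exact Module.End.mem_eigenspace_iff.mp (hmem j).1
  · exact Module.End.mem_eigenspace_iff.mp (hmem j).2

/-- A linear functional on doubly stochastic matrices is dominated by a permutation. -/
lemma exists_perm_ge {n : ℕ} {R : Matrix (Fin n) (Fin n) ℝ} (hR : R * Rᵀ = 1)
    (M : Fin n → Fin n → ℝ) :
    ∃ σ : Equiv.Perm (Fin n), ∑ i, ∑ j, R i j ^ 2 * M i j ≤ ∑ i, M i (σ i) := by
  let S : Matrix (Fin n) (Fin n) ℝ := Matrix.of fun i j => R i j ^ 2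
  have hrow : ∀ i, ∑ j, R i j ^ 2 = 1 := by
    intro i
    have := congrFun (congrFun hR i) i
    simpa [Matrix.mul_apply, sq] using this
  have hcol : ∀ j, ∑ i, R i j ^ 2 = 1 := by
    intro j
    have := congrFun (congrFun (orth_comm hR) j) j
    simpa [Matrix.mul_apply, sq] using this
  have hS : S ∈ doublyStochastic ℝ (Fin n) := by
    rw [mem_doublyStochastic_iff_sum]
    exact ⟨fun i j => sq_nonneg _, hrow, hcol⟩
  obtain ⟨w, hw0, hw1, hwS⟩ := exists_eq_sum_perm_of_mem_doublyStochastic hS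
  have hsum : ∑ i, ∑ j, R i j ^ 2 * M i j = ∑ σ, w σ * ∑ i, M i (σ i) := by
    have h1 : ∀ i j, R i j ^ 2 = ∑ σ, w σ * σ.permMatrix ℝ i j := by
      intro i j
      have := congrFun (congrFun hwS i) j
      rw [Matrix.sum_apply] at this
      simpa [S] using this.symm
    simp_rw [h1, Finset.sum_mul, Finset.mul_sum]
    rw [Finset.sum_congr rfl fun i _ => Finset.sum_comm, Finset.sum_comm]
    refine Finset.sum_congr rfl fun σ _ => Finset.sum_congr rfl fun i _ => ?_
    rw [Finset.sum_eq_single (σ i)]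
    · simp [Equiv.Perm.permMatrix, PEquiv.toMatrix_apply]
    · intro j _ hj
      simp [Equiv.Perm.permMatrix, PEquiv.toMatrix_apply, Ne.symm hj]
    · simp
  by_contra hcon
  push Not at hcon
  have : ∑ σ, w σ * ∑ i, M i (σ i) < ∑ i, ∑ j, R i j ^ 2 * M i j := by
    calc ∑ σ, w σ * ∑ i, M i (σ i) < ∑ σ, w σ * ∑ i, ∑ j, R i j ^ 2 * M i j := by
          apply Finset.sum_lt_sum
          · exact fun σ _ => mul_le_mul_of_nonneg_left (hcon σ).le (hw0 σ)
          · have : ∃ σ ∈ Finset.univ, w σ ≠ 0 :=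
              Finset.exists_ne_zero_of_sum_ne_zero (by rw [hw1]; exact one_ne_zero)
            obtain ⟨σ, hσ, hne⟩ := this
            exact ⟨σ, hσ, mul_lt_mul_of_pos_left (hcon σ) (lt_of_le_of_ne (hw0 σ) hne.symm)⟩
      _ = _ := by rw [← Finset.sum_mul, hw1, one_mul]
  linarith


/-! ### Part 2: inner products, epsilon form of regular subgradients -/

lemma ipM_eq_sum {n : ℕ} (A B : Sym n) :
    ipM A B = ∑ i, ∑ j, (A : Matrix (Fin n) (Fin n) ℝ) i j * (B : Matrix (Fin n) (Fin n) ℝ) i j := by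
  have hB : (B : Matrix (Fin n) (Fin n) ℝ)ᵀ = B := B.2
  rw [ipM, Matrix.trace]
  refine Finset.sum_congr rfl fun i _ => ?_
  rw [Matrix.diag_apply, Matrix.mul_apply]
  refine Finset.sum_congr rfl fun j _ => ?_
  conv_lhs => rw [← hB]
  rfl

lemma ipM_self_nonneg {n : ℕ} (A : Sym n) : 0 ≤ ipM A A := by
  rw [ipM_eq_sum]
  exact Finset.sum_nonneg fun i _ => Finset.sum_nonneg fun j _ => mul_self_nonneg _

lemma ipV_self_nonneg {n : ℕ} (x : Fin n → ℝ) : 0 ≤ ipV x x :=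
  Finset.sum_nonneg fun _ _ => mul_self_nonneg _

lemma nrmM_pos {n : ℕ} (A : Sym n) (h : A ≠ 0) : 0 < nrm ipM A := by
  rw [nrm, Real.sqrt_pos]
  refine lt_of_le_of_ne (ipM_self_nonneg A) fun h0 => h ?_
  rw [ipM_eq_sum] at h0
  apply Subtype.ext
  ext i j
  have h1 := (Finset.sum_eq_zero_iff_of_nonneg
    (fun i _ => Finset.sum_nonneg fun j _ => mul_self_nonneg _)).mp h0.symm i (Finset.mem_univ i)
  have h2 := (Finset.sum_eq_zero_iff_of_nonneg
    (fun j _ => mul_self_nonneg _)).mp h1 j (Finset.mem_univ j)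
  exact mul_self_eq_zero.mp h2

lemma nrmV_pos {n : ℕ} (x : Fin n → ℝ) (h : x ≠ 0) : 0 < nrm ipV x := by
  rw [nrm, Real.sqrt_pos]
  refine lt_of_le_of_ne (ipV_self_nonneg x) fun h0 => h ?_
  funext j
  have h2 := (Finset.sum_eq_zero_iff_of_nonneg
    (fun j _ => mul_self_nonneg _)).mp h0.symm j (Finset.mem_univ j)
  exact mul_self_eq_zero.mp h2

lemma continuous_ipM {n : ℕ} : Continuous fun p : Sym n × Sym n => ipM p.1 p.2 := by
  unfold ipM
  fun_prop

lemma continuous_ipV {n : ℕ} : Continuous fun p : (Fin n → ℝ) × (Fin n → ℝ) => ipV p.1 p.2 := by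
  unfold ipV
  fun_prop

lemma continuous_nrmM {n : ℕ} : Continuous fun A : Sym n => nrm ipM A :=
  Real.continuous_sqrt.comp (continuous_ipM.comp (continuous_id.prodMk continuous_id))

lemma continuous_nrmV {n : ℕ} : Continuous fun x : Fin n → ℝ => nrm ipV x :=
  Real.continuous_sqrt.comp (continuous_ipV.comp (continuous_id.prodMk continuous_id))

lemma abs_le_nrmV {n : ℕ} (x : Fin n → ℝ) (i : Fin n) : |x i| ≤ nrm ipV x := by
  rw [nrm, ← Real.sqrt_mul_self_eq_abs]
  apply Real.sqrt_le_sqrt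
  exact Finset.single_le_sum (f := fun i => x i * x i) (fun i _ => mul_self_nonneg _)
    (Finset.mem_univ i)

/-- Epsilon form of the regular subgradient condition. -/
lemma reg_iff {E : Type*} [AddCommGroup E] [Module ℝ E] [TopologicalSpace E]
    {ip : E → E → ℝ} (hpos : ∀ z : E, z ≠ 0 → 0 < nrm ip z) (hzero : ∀ v, ip v 0 = 0)
    (f : E → EReal) (x v : E) :
    RegSubgrad ip f x v ↔ IsFiniteAt f x ∧ ∀ ε > (0 : ℝ), ∀ᶠ y in 𝓝 x,
      f x + ((ip v (y - x) - ε * nrm ip (y - x) : ℝ) : EReal) ≤ f y := by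
  unfold RegSubgrad
  refine and_congr_right fun hfin => ?_
  obtain ⟨r, hr⟩ : ∃ r : ℝ, f x = (r : EReal) := ⟨(f x).toReal, (EReal.coe_toReal hfin.1 hfin.2).symm⟩
  have pt : ∀ (y : E) (ε : ℝ), y ≠ x →
      (((-ε : ℝ) : EReal) ≤ (((nrm ip (y - x))⁻¹ : ℝ) : EReal) *
          (f y - f x - ((ip v (y - x) : ℝ) : EReal)) ↔
        f x + ((ip v (y - x) - ε * nrm ip (y - x) : ℝ) : EReal) ≤ f y) := by
    intro y ε hy
    have hp := hpos (y - x) (sub_ne_zero.mpr hy)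
    rw [hr]
    induction hfy : f y using EReal.rec with
    | bot =>
      simp only [EReal.bot_sub]
      rw [EReal.coe_mul_bot_of_pos (inv_pos.mpr hp)]
      rw [← EReal.coe_add]
      simp only [le_bot_iff, EReal.coe_ne_bot]
    | top =>
      simp only [EReal.top_sub_coe, le_top, iff_true]
      rw [EReal.coe_mul_top_of_pos (inv_pos.mpr hp)]
      exact le_top
    | coe s =>
      norm_cast
      rw [inv_mul_eq_div, le_div_iff₀ hp]
      constructor <;> intro h <;> linarith
  constructor
  · intro h ε hε
    have h1 : ((-ε : ℝ) : EReal) < 0 := by exact_mod_cast neg_neg_of_pos hε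
    have h2 := Filter.eventually_lt_of_lt_liminf (lt_of_lt_of_le h1 h)
    rw [eventually_nhdsWithin_iff] at h2
    filter_upwards [h2] with y hy
    by_cases hyx : y = x
    · subst hyx
      have : nrm ip (y - y) = 0 := by rw [sub_self, nrm, hzero, Real.sqrt_zero]
      rw [this, sub_self, hzero]; simp
    · exact (pt y ε hyx).mp (hy hyx).le
  · intro h
    refine le_of_forall_lt fun c hc => ?_
    obtain ⟨c', hcc', hc'⟩ := EReal.lt_iff_exists_real_btwn.mp hc
    have hc0 : c' < 0 := by exact_mod_cast hc'
    refine lt_of_lt_of_le hcc' (Filter.le_liminf_of_le (by isBoundedDefault) ?_)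
    rw [eventually_nhdsWithin_iff]
    filter_upwards [h (-c') (by linarith)] with y hy hyx
    have := (pt y (-c') hyx).mpr hy
    rwa [neg_neg] at this

lemma ipM_zero {n : ℕ} (v : Sym n) : ipM v 0 = 0 := by simp [ipM]
lemma ipV_zero {n : ℕ} (v : Fin n → ℝ) : ipV v 0 = 0 := by simp [ipV]

lemma regM_iff {n : ℕ} (f : Sym n → EReal) (x v : Sym n) :
    RegSubgrad ipM f x v ↔ IsFiniteAt f x ∧ ∀ ε > (0 : ℝ), ∀ᶠ y in 𝓝 x,
      f x + ((ipM v (y - x) - ε * nrm ipM (y - x) : ℝ) : EReal) ≤ f y :=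
  reg_iff nrmM_pos ipM_zero f x v

lemma regV_iff {n : ℕ} (f : (Fin n → ℝ) → EReal) (x v : Fin n → ℝ) :
    RegSubgrad ipV f x v ↔ IsFiniteAt f x ∧ ∀ ε > (0 : ℝ), ∀ᶠ y in 𝓝 x,
      f x + ((ipV v (y - x) - ε * nrm ipV (y - x) : ℝ) : EReal) ≤ f y :=
  reg_iff nrmV_pos ipV_zero f x v

/-- Trace formula. -/
lemma ipM_cjD {n : ℕ} (U P : Matrix (Fin n) (Fin n) ℝ) (a b : Fin n → ℝ) :
    ipM (cjD U a) (cjD P b) = ∑ i, ∑ j, (Uᵀ * P) i j ^ 2 * (a i * b j) := by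
  have h1 : ipM (cjD U a) (cjD P b)
      = (Matrix.diagonal a * (Uᵀ * P) * (Matrix.diagonal b * (Uᵀ * P)ᵀ)).trace := by
    rw [ipM, cjD_val, cjD_val, Matrix.transpose_mul, Matrix.transpose_transpose,
      Matrix.mul_assoc U, Matrix.mul_assoc U, Matrix.trace_mul_comm U]
    simp only [Matrix.mul_assoc]
  rw [h1, Matrix.trace]
  refine Finset.sum_congr rfl fun i _ => ?_
  rw [Matrix.diag_apply, Matrix.mul_apply]
  refine Finset.sum_congr rfl fun j _ => ?_
  rw [Matrix.diagonal_mul, Matrix.diagonal_mul, Matrix.transpose_apply]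
  ring

lemma ipM_cjD_self {n : ℕ} {U : Matrix (Fin n) (Fin n) ℝ} (hU : U * Uᵀ = 1) (a b : Fin n → ℝ) :
    ipM (cjD U a) (cjD U b) = ipV a b := by
  rw [ipM_cjD, orth_comm hU, ipV]
  refine Finset.sum_congr rfl fun i _ => ?_
  rw [Finset.sum_eq_single i]
  · simp
  · intro j _ hj; simp [Matrix.one_apply_ne (Ne.symm hj)]
  · simp

lemma cjD_sub {n : ℕ} (U : Matrix (Fin n) (Fin n) ℝ) (a b : Fin n → ℝ) :
    cjD U a - cjD U b = cjD U (a - b) := by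
  apply Subtype.ext
  change U * Matrix.diagonal a * Uᵀ - U * Matrix.diagonal b * Uᵀ = U * Matrix.diagonal (a - b) * Uᵀ
  have : Matrix.diagonal (a - b) = Matrix.diagonal a - Matrix.diagonal b := by
    rw [Matrix.diagonal_sub]; rfl
  rw [this, Matrix.mul_sub, Matrix.sub_mul]

lemma nrm_cjD {n : ℕ} {U : Matrix (Fin n) (Fin n) ℝ} (hU : U * Uᵀ = 1) (a : Fin n → ℝ) :
    nrm ipM (cjD U a) = nrm ipV a := by
  rw [nrm, nrm, ipM_cjD_self hU]

lemma ipM_sub_right {n : ℕ} (A B C : Sym n) : ipM A (B - C) = ipM A B - ipM A C := by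
  simp only [ipM, Submodule.coe_sub, Matrix.mul_sub, Matrix.trace_sub]

lemma ipM_sub_left {n : ℕ} (A B C : Sym n) : ipM (A - B) C = ipM A C - ipM B C := by
  simp only [ipM, Submodule.coe_sub, Matrix.sub_mul, Matrix.trace_sub]

lemma ipM_comm {n : ℕ} (A B : Sym n) : ipM A B = ipM B A := Matrix.trace_mul_comm _ _

/-- Smooth path of orthogonal matrices with prescribed skew velocity. -/
lemma exists_orth_path {n : ℕ} (S : Matrix (Fin n) (Fin n) ℝ) (hS : Sᵀ = -S) :
    ∃ E : ℝ → Matrix (Fin n) (Fin n) ℝ, (∀ t, E t * (E t)ᵀ = 1) ∧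
      Tendsto E (𝓝 0) (𝓝 1) ∧
      Tendsto (fun t => t⁻¹ • (E t - 1)) (𝓝[≠] 0) (𝓝 S) := by
  let _ : NormedRing (Matrix (Fin n) (Fin n) ℝ) := Matrix.linftyOpNormedRing
  let _ : NormedAlgebra ℝ (Matrix (Fin n) (Fin n) ℝ) := Matrix.linftyOpNormedAlgebra
  have hd := hasDerivAt_exp_smul_const (𝕂 := ℝ) S (0 : ℝ)
  refine ⟨fun t => NormedSpace.exp (t • S), fun t => ?_, ?_, ?_⟩
  · rw [← Matrix.exp_transpose, Matrix.transpose_smul, hS, smul_neg, Matrix.exp_neg]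
    exact Matrix.mul_nonsing_inv _ ((Matrix.isUnit_iff_isUnit_det _).mp (Matrix.isUnit_exp _))
  · have := hd.continuousAt.tendsto
    simp only [zero_smul, NormedSpace.exp_zero] at this
    exact this
  · have := hasDerivAt_iff_tendsto_slope_zero.mp hd
    simp only [zero_add, zero_smul, NormedSpace.exp_zero, one_mul] at this
    exact this


/-! ### Part 3: subgradients of spectral functions -/

lemma orth_row {n : ℕ} {R : Matrix (Fin n) (Fin n) ℝ} (hR : R * Rᵀ = 1) (a : Fin n → ℝ) :
    ∑ i, ∑ j, R i j ^ 2 * a i = ∑ i, a i := by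
  refine Finset.sum_congr rfl fun i _ => ?_
  have := congrFun (congrFun hR i) i
  rw [← Finset.sum_mul]
  have h : ∑ j, R i j ^ 2 = 1 := by simpa [Matrix.mul_apply, sq] using this
  rw [h, one_mul]

lemma orth_col {n : ℕ} {R : Matrix (Fin n) (Fin n) ℝ} (hR : R * Rᵀ = 1) (a : Fin n → ℝ) :
    ∑ i, ∑ j, R i j ^ 2 * a j = ∑ j, a j := by
  rw [Finset.sum_comm]
  refine Finset.sum_congr rfl fun j _ => ?_
  have := congrFun (congrFun (orth_comm hR) j) j
  rw [← Finset.sum_mul]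
  have h : ∑ i, R i j ^ 2 = 1 := by simpa [Matrix.mul_apply, sq] using this
  rw [h, one_mul]

lemma nrmM_sq {n : ℕ} (A : Sym n) : nrm ipM A ^ 2 = ipM A A :=
  Real.sq_sqrt (ipM_self_nonneg A)

lemma nrmV_sq {n : ℕ} (a : Fin n → ℝ) : nrm ipV a ^ 2 = ipV a a :=
  Real.sq_sqrt (ipV_self_nonneg a)

/-- Matching of eigenvalues by a single permutation. -/
lemma match_perm {n : ℕ} {U P : Matrix (Fin n) (Fin n) ℝ} (hU : U * Uᵀ = 1) (hP : P * Pᵀ = 1)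
    (x v z : Fin n → ℝ) (K : ℝ) :
    ∃ σ : Equiv.Perm (Fin n),
      ipM (cjD U v) (cjD P z - cjD U x) - K * nrm ipM (cjD P z - cjD U x) ^ 2 ≤
        ipV v ((fun i => z (σ i)) - x) - K * nrm ipV ((fun i => z (σ i)) - x) ^ 2 := by
  have hR : (Uᵀ * P) * (Uᵀ * P)ᵀ = 1 := orth_mul (orth_transpose hU) hP
  obtain ⟨σ, hσ⟩ := exists_perm_ge hR (fun i j => v i * (z j - x i) - K * (z j - x i) ^ 2)
  refine ⟨σ, ?_⟩
  have e1 : ipV v ((fun i => z (σ i)) - x) - K * nrm ipV ((fun i => z (σ i)) - x) ^ 2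
      = ∑ i, (v i * (z (σ i) - x i) - K * (z (σ i) - x i) ^ 2) := by
    rw [nrmV_sq, ipV, ipV, Finset.mul_sum, ← Finset.sum_sub_distrib]
    refine Finset.sum_congr rfl fun i _ => ?_
    simp only [Pi.sub_apply]; ring
  have e2 : ipM (cjD U v) (cjD P z - cjD U x) - K * nrm ipM (cjD P z - cjD U x) ^ 2
      = ∑ i, ∑ j, (Uᵀ * P) i j ^ 2 * (v i * (z j - x i) - K * (z j - x i) ^ 2) := by
    rw [nrmM_sq, ipM_sub_right, ipM_sub_right, ipM_sub_left, ipM_sub_left,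
      ipM_comm (cjD P z) (cjD U x), ipM_cjD_self hU, ipM_cjD_self hU, ipM_cjD_self hP,
      ipM_cjD, ipM_cjD, ipV, ipV, ipV, ← orth_row hR (fun i => v i * x i),
      ← orth_row hR (fun i => x i * x i), ← orth_col hR (fun i => z i * z i)]
    simp only [Finset.mul_sum, ← Finset.sum_sub_distrib]
    refine Finset.sum_congr rfl fun i _ => Finset.sum_congr rfl fun j _ => ?_
    ring
  rw [e1, e2]
  exact hσ

lemma ipV_le_add {n : ℕ} (v e : Fin n → ℝ) : ipV v e ≤ ipV v v + ipV e e := by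
  rw [ipV, ipV, ipV, ← Finset.sum_add_distrib]
  refine Finset.sum_le_sum fun i _ => ?_
  nlinarith [sq_nonneg (v i - e i), sq_nonneg (v i), sq_nonneg (e i)]

lemma reg_lift {n : ℕ} {θ : (Fin n → ℝ) → EReal} (hsym : SymmetricFn θ)
    {U : Matrix (Fin n) (Fin n) ℝ} (hU : U * Uᵀ = 1) {x v : Fin n → ℝ}
    (h : RegSubgrad ipV θ x v) : RegSubgrad ipM (specFn θ) (cjD U x) (cjD U v) := by
  rw [regV_iff] at h
  obtain ⟨hfin, h⟩ := h
  rw [regM_iff]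
  refine ⟨by rw [IsFiniteAt, specFn_cjD hsym hU]; exact hfin, fun ε hε => ?_⟩
  rw [specFn_cjD hsym hU]
  obtain ⟨δ, hδ, hθ⟩ := Metric.eventually_nhds_iff.mp (h (ε / 2) (by linarith))
  set N := ipV v v with hN
  have hN0 : 0 ≤ N := ipV_self_nonneg v
  set e1 := ε / 2 with he1
  have he1p : 0 < e1 := by rw [he1]; linarith
  have c1 : Tendsto (fun Z : Sym n => nrm ipM (Z - cjD U x)) (𝓝 (cjD U x)) (𝓝 0) := by
    have : Continuous fun Z : Sym n => nrm ipM (Z - cjD U x) :=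
      continuous_nrmM.comp (continuous_id.sub continuous_const)
    have h0 := this.tendsto (cjD U x)
    simpa [nrm, ipM] using h0
  have c2 : Tendsto (fun Z : Sym n => ipM (cjD U v) (Z - cjD U x)) (𝓝 (cjD U x)) (𝓝 0) := by
    have : Continuous fun Z : Sym n => ipM (cjD U v) (Z - cjD U x) :=
      continuous_ipM.comp (continuous_const.prodMk (continuous_id.sub continuous_const))
    have h0 := this.tendsto (cjD U x)
    simpa [ipM] using h0
  have f1 := c1.eventually_lt_const (show (0 : ℝ) < e1 / 2 by linarith)
  have f2 := c1.eventually_lt_const (show (0 : ℝ) < δ ^ 2 * e1 / (2 * (N + 2)) by positivity)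
  have f3 := c1.eventually_lt_const (show (0 : ℝ) < 1 / e1 by positivity)
  have f4 := c2.eventually_const_lt (show (-1 : ℝ) < 0 by norm_num)
  filter_upwards [f1, f2, f3, f4] with Z g1 g2 g3 g4
  obtain ⟨P, z, hP, rfl⟩ := sym_exists_cjD Z
  by_cases hZX : cjD P z = cjD U x
  · rw [hZX, specFn_cjD hsym hU, sub_self, ipM_zero]
    simp [nrm, ipM]
  have hpos := nrmM_pos _ (sub_ne_zero.mpr hZX)
  set hh := nrm ipM (cjD P z - cjD U x) with hhh
  obtain ⟨σ, hσ⟩ := match_perm hU hP x v z (e1 / hh)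
  rw [← hhh] at hσ
  set e := (fun i => z (σ i)) - x with he
  set L := ipM (cjD U v) (cjD P z - cjD U x)
  have hle := ipV_le_add v e
  rw [← nrmV_sq e, ← hN] at hle
  set d := nrm ipV e with hd
  have hd0 : 0 ≤ d := Real.sqrt_nonneg _
  have hK : e1 / hh * hh ^ 2 = e1 * hh := by field_simp
  have hK2 : e1 / hh * d ^ 2 * hh = e1 * d ^ 2 := by field_simp
  rw [hK] at hσ
  -- smallness of `d`
  have g3' : e1 * hh < 1 := by
    rw [lt_div_iff₀ he1p] at g3; linarith
  have hsmall : d ^ 2 < δ ^ 2 := by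
    have s1 : e1 / hh * d ^ 2 ≤ d ^ 2 + (N + 2) := by linarith
    have s2 : e1 * d ^ 2 ≤ (d ^ 2 + (N + 2)) * hh := by
      rw [← hK2]; exact mul_le_mul_of_nonneg_right s1 hpos.le
    rw [lt_div_iff₀ (by positivity)] at g2
    have s3 : d ^ 2 * hh ≤ d ^ 2 * (e1 / 2) := mul_le_mul_of_nonneg_left g1.le (sq_nonneg d)
    have s4 : e1 * d ^ 2 < e1 * δ ^ 2 := by nlinarith
    exact lt_of_mul_lt_mul_left s4 he1p.le
  have hdδ : d < δ := lt_of_pow_lt_pow_left₀ 2 hδ.le hsmall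
  have hdist : dist (fun i => z (σ i)) x < δ := by
    rw [dist_pi_lt_iff hδ]
    intro i
    rw [Real.dist_eq]
    exact lt_of_le_of_lt (abs_le_nrmV e i) hdδ
  have key := hθ hdist
  rw [specFn_cjD hsym hP, ← hsym z σ]
  refine le_trans ?_ key
  refine add_le_add le_rfl ?_
  rw [EReal.coe_le_coe_iff, ← he, ← hd]
  have : e1 * d ≤ e1 / hh * d ^ 2 + e1 * hh := by
    have : e1 * d * hh ≤ (e1 / hh * d ^ 2 + e1 * hh) * hh := by
      rw [add_mul, hK2]
      nlinarith [mul_nonneg he1p.le (sq_nonneg (d - hh)), mul_nonneg he1p.le (mul_nonneg hd0 hpos.le)]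
    exact le_of_mul_le_mul_right this hpos
  have h2 : ε = 2 * e1 := by rw [he1]; ring
  rw [h2]
  linarith

lemma continuous_cjD {n : ℕ} :
    Continuous fun p : Matrix (Fin n) (Fin n) ℝ × (Fin n → ℝ) => cjD p.1 p.2 := by
  refine Continuous.subtype_mk ?_ _
  exact (continuous_fst.matrix_mul continuous_snd.matrix_diagonal).matrix_mul
    continuous_fst.matrix_transpose

lemma reg_drop {n : ℕ} {θ : (Fin n → ℝ) → EReal} (hsym : SymmetricFn θ)
    {U : Matrix (Fin n) (Fin n) ℝ} (hU : U * Uᵀ = 1) {x v : Fin n → ℝ}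
    (h : RegSubgrad ipM (specFn θ) (cjD U x) (cjD U v)) : RegSubgrad ipV θ x v := by
  rw [regM_iff, IsFiniteAt, specFn_cjD hsym hU] at h
  rw [regV_iff]
  refine ⟨h.1, fun ε hε => ?_⟩
  have hc : Continuous fun y : Fin n → ℝ => cjD U y :=
    continuous_cjD.comp (continuous_const.prodMk continuous_id)
  have := (hc.tendsto x).eventually (h.2 ε hε)
  filter_upwards [this] with y hy
  rwa [cjD_sub, ipM_cjD_self hU, nrm_cjD hU, specFn_cjD hsym hU] at hy

lemma nrmM_smul {n : ℕ} {c : ℝ} (hc : 0 ≤ c) (A : Sym n) : nrm ipM (c • A) = c * nrm ipM A := by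
  have : ipM (c • A) (c • A) = c ^ 2 * ipM A A := by
    simp only [ipM, Submodule.coe_smul, Matrix.smul_mul, Matrix.mul_smul, Matrix.trace_smul,
      smul_eq_mul]
    ring
  rw [nrm, nrm, this, Real.sqrt_mul (sq_nonneg c), Real.sqrt_sq hc]

lemma ipM_smul {n : ℕ} (c : ℝ) (A B : Sym n) : ipM A (c • B) = c * ipM A B := by
  simp only [ipM, Submodule.coe_smul, Matrix.mul_smul, Matrix.trace_smul, smul_eq_mul]

/-- First order expansion of conjugation along an orthogonal path. -/
lemma conj_expand {n : ℕ} {ι : Type*} {l : Filter ι} {t : ι → ℝ}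
    {E M : ι → Matrix (Fin n) (Fin n) ℝ} {S A W : Matrix (Fin n) (Fin n) ℝ}
    (hE : Tendsto E l (𝓝 1)) (hS : Tendsto (fun k => (t k)⁻¹ • (E k - 1)) l (𝓝 S))
    (hM : Tendsto M l (𝓝 A)) (hW : Tendsto (fun k => (t k)⁻¹ • (M k - A)) l (𝓝 W)) :
    Tendsto (fun k => (t k)⁻¹ • (E k * M k * (E k)ᵀ - A)) l (𝓝 (W + S * A + A * Sᵀ)) := by
  have hdec : ∀ k, (t k)⁻¹ • (E k * M k * (E k)ᵀ - A)
      = (t k)⁻¹ • (M k - A) + ((t k)⁻¹ • (E k - 1)) * M k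
        + E k * M k * ((t k)⁻¹ • (E k - 1))ᵀ := by
    intro k
    rw [Matrix.transpose_smul, Matrix.smul_mul, Matrix.mul_smul, ← smul_add, ← smul_add,
      Matrix.transpose_sub, Matrix.transpose_one]
    congr 1
    noncomm_ring
  simp_rw [hdec]
  have ht : Tendsto (fun k => ((t k)⁻¹ • (E k - 1))ᵀ) l (𝓝 Sᵀ) :=
    (continuous_id.matrix_transpose.tendsto S).comp hS
  have := ((hW.add (hS.mul hM)).add ((hE.mul hM).mul ht))
  simpa using this

lemma cjD_mul {n : ℕ} (E P : Matrix (Fin n) (Fin n) ℝ) (z : Fin n → ℝ) :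
    (cjD (E * P) z : Matrix (Fin n) (Fin n) ℝ)
      = E * (cjD P z : Matrix (Fin n) (Fin n) ℝ) * Eᵀ := by
  simp only [cjD_val, Matrix.transpose_mul, Matrix.mul_assoc]

lemma tendsto_ipM {n : ℕ} {ι : Type*} {l : Filter ι} (B : Sym n) {f : ι → Sym n} {D : Sym n}
    (h : Tendsto f l (𝓝 D)) : Tendsto (fun t => ipM B (f t)) l (𝓝 (ipM B D)) := by
  have hc : Continuous fun A : Sym n => ipM B A :=
    continuous_ipM.comp (continuous_const.prodMk continuous_id)
  exact (hc.tendsto D).comp h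

lemma tendsto_nrmM {n : ℕ} {ι : Type*} {l : Filter ι} {f : ι → Sym n} {D : Sym n}
    (h : Tendsto f l (𝓝 D)) : Tendsto (fun t => nrm ipM (f t)) l (𝓝 (nrm ipM D)) :=
  (continuous_nrmM.tendsto D).comp h

lemma reg_commute {n : ℕ} {θ : (Fin n → ℝ) → EReal} (hsym : SymmetricFn θ) {A B : Sym n}
    (h : RegSubgrad ipM (specFn θ) A B) :
    (A : Matrix (Fin n) (Fin n) ℝ) * (B : Matrix (Fin n) (Fin n) ℝ)
      = (B : Matrix (Fin n) (Fin n) ℝ) * (A : Matrix (Fin n) (Fin n) ℝ) := by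
  obtain ⟨P, z, hP, rfl⟩ := sym_exists_cjD A
  rw [regM_iff, IsFiniteAt, specFn_cjD hsym hP] at h
  obtain ⟨hfin, h⟩ := h
  set a : Matrix (Fin n) (Fin n) ℝ := (cjD P z : Matrix (Fin n) (Fin n) ℝ) with ha
  set b : Matrix (Fin n) (Fin n) ℝ := (B : Matrix (Fin n) (Fin n) ℝ) with hb
  have haT : aᵀ = a := (cjD P z).2
  have hbT : bᵀ = b := B.2
  set S := b * a - a * b with hSdef
  have hS : Sᵀ = -S := by
    rw [hSdef, Matrix.transpose_sub, Matrix.transpose_mul, Matrix.transpose_mul, haT, hbT]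
    abel
  obtain ⟨E, hEo, hE1, hES⟩ := exists_orth_path S hS
  have hE1' : Tendsto E (𝓝[>] 0) (𝓝 1) := hE1.mono_left nhdsWithin_le_nhds
  have hES' : Tendsto (fun t => t⁻¹ • (E t - 1)) (𝓝[>] 0) (𝓝 S) :=
    hES.mono_left (nhdsWithin_mono _ fun t ht => ne_of_gt ht)
  let Z : ℝ → Sym n := fun t => cjD (E t * P) z
  have hZA : Tendsto Z (𝓝[>] 0) (𝓝 (cjD P z)) := by
    have h1 : Tendsto (fun t => E t * P) (𝓝[>] 0) (𝓝 P) := by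
      have := hE1'.mul (tendsto_const_nhds (x := P))
      rwa [Matrix.one_mul] at this
    have h2 : Continuous fun Q : Matrix (Fin n) (Fin n) ℝ => cjD Q z :=
      continuous_cjD.comp (continuous_id.prodMk continuous_const)
    exact (h2.tendsto P).comp h1
  obtain ⟨D, hDval⟩ : ∃ D : Sym n, (D : Matrix (Fin n) (Fin n) ℝ) = S * a + a * Sᵀ := ⟨⟨_, by
    change (S * a + a * Sᵀ)ᵀ = _
    rw [Matrix.transpose_add, Matrix.transpose_mul, Matrix.transpose_mul,
      Matrix.transpose_transpose, haT, add_comm]⟩, rfl⟩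
  have hD : Tendsto (fun t : ℝ => t⁻¹ • (Z t - cjD P z)) (𝓝[>] 0) (𝓝 D) := by
    rw [tendsto_subtype_rng, hDval]
    have := conj_expand (A := a) (W := 0) hE1' hES' (M := fun _ => a) tendsto_const_nhds
      (by simp)
    simp only [zero_add] at this
    refine this.congr fun t => ?_
    simp only [Z, Submodule.coe_smul, Submodule.coe_sub, cjD_mul]
    rfl
  have hle : ∀ ε > (0 : ℝ), ipM B D ≤ ε * nrm ipM D := by
    intro ε hε
    have l1 : Tendsto (fun t : ℝ => ipM B (t⁻¹ • (Z t - cjD P z))) (𝓝[>] 0) (𝓝 (ipM B D)) :=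
      tendsto_ipM B hD
    have l2 : Tendsto (fun t : ℝ => ε * nrm ipM (t⁻¹ • (Z t - cjD P z))) (𝓝[>] 0)
        (𝓝 (ε * nrm ipM D)) :=
      (tendsto_nrmM hD).const_mul ε
    refine le_of_tendsto_of_tendsto l1 l2 ?_
    filter_upwards [hZA.eventually (h ε hε), self_mem_nhdsWithin] with t ht htpos
    have htp : (0 : ℝ) < t := htpos
    rw [specFn_cjD hsym (orth_mul (hEo t) hP)] at ht
    obtain ⟨r, hr⟩ : ∃ r : ℝ, θ z = (r : EReal) :=
      ⟨(θ z).toReal, (EReal.coe_toReal hfin.1 hfin.2).symm⟩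
    rw [hr] at ht
    norm_cast at ht
    rw [ipM_smul, nrmM_smul (inv_nonneg.mpr htp.le)]
    have : t⁻¹ * ipM B (Z t - cjD P z) ≤ t⁻¹ * (ε * nrm ipM (Z t - cjD P z)) :=
      mul_le_mul_of_nonneg_left (by linarith) (inv_nonneg.mpr htp.le)
    linarith
  have hle0 : ipM B D ≤ 0 := by
    have l : Tendsto (fun ε : ℝ => ε * nrm ipM D) (𝓝[>] 0) (𝓝 (0 * nrm ipM D)) :=
      (tendsto_id.mono_left nhdsWithin_le_nhds).mul_const _
    rw [zero_mul] at l
    refine ge_of_tendsto l ?_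
    filter_upwards [self_mem_nhdsWithin] with ε hε using hle ε hε
  have hval : ipM B D = (Sᵀ * S).trace := by
    rw [ipM, hDval, ← hb, hS, Matrix.mul_add, Matrix.trace_add]
    have t1 : (b * (S * a)).trace = (a * b * S).trace := by
      rw [← Matrix.mul_assoc, Matrix.trace_mul_comm, ← Matrix.mul_assoc]
    have t2 : (b * (a * -S)).trace = -(b * a * S).trace := by
      rw [Matrix.mul_neg, Matrix.mul_neg, Matrix.trace_neg, Matrix.mul_assoc]
    rw [t1, t2, hSdef]
    simp only [Matrix.neg_mul, Matrix.trace_neg, Matrix.sub_mul, Matrix.trace_sub]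
    ring
  have hS0 : S = 0 := by
    rw [hval, Matrix.trace] at hle0
    simp only [Matrix.diag_apply, Matrix.mul_apply, Matrix.transpose_apply] at hle0
    have hz := le_antisymm hle0 (Finset.sum_nonneg fun i _ => Finset.sum_nonneg fun j _ =>
      mul_self_nonneg (S j i))
    ext j i
    have h1 := (Finset.sum_eq_zero_iff_of_nonneg
      (fun i _ => Finset.sum_nonneg fun j _ => mul_self_nonneg _)).mp hz i (Finset.mem_univ i)
    have h2 := (Finset.sum_eq_zero_iff_of_nonneg
      (fun j _ => mul_self_nonneg _)).mp h1 j (Finset.mem_univ j)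
    exact mul_self_eq_zero.mp h2
  exact (sub_eq_zero.mp hS0).symm

lemma reg_decomp {n : ℕ} {θ : (Fin n → ℝ) → EReal} (hsym : SymmetricFn θ) {A B : Sym n}
    (h : RegSubgrad ipM (specFn θ) A B) :
    ∃ (U : Matrix (Fin n) (Fin n) ℝ) (x v : Fin n → ℝ), U * Uᵀ = 1 ∧ A = cjD U x ∧
      B = cjD U v ∧ RegSubgrad ipV θ x v := by
  obtain ⟨U, x, v, hU, rfl, rfl⟩ := simul_diag A B (reg_commute hsym h)
  exact ⟨U, x, v, hU, rfl, rfl, reg_drop hsym hU h⟩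

lemma isCompact_orth (n : ℕ) :
    IsCompact {U : Matrix (Fin n) (Fin n) ℝ | U * Uᵀ = 1} := by
  have hc : IsCompact (Set.pi Set.univ fun _ : Fin n => Set.pi Set.univ fun _ : Fin n =>
      Set.Icc (-1 : ℝ) 1) :=
    isCompact_univ_pi fun _ => isCompact_univ_pi fun _ => isCompact_Icc
  have hcl : IsClosed {U : Matrix (Fin n) (Fin n) ℝ | U * Uᵀ = 1} :=
    isClosed_eq (continuous_id.matrix_mul continuous_id.matrix_transpose) continuous_const
  refine IsCompact.of_isClosed_subset hc hcl ?_
  intro U hU i _ j _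
  have hU' : U * Uᵀ = 1 := hU
  have := congrFun (congrFun hU' i) i
  have h : ∑ j, U i j ^ 2 = 1 := by simpa [Matrix.mul_apply, sq] using this
  have h2 : U i j ^ 2 ≤ 1 := by
    rw [← h]
    exact Finset.single_le_sum (f := fun j => U i j ^ 2) (fun j _ => sq_nonneg _)
      (Finset.mem_univ j)
  exact abs_le.mp (by rwa [← sq_le_one_iff_abs_le_one])

lemma orth_subseq {n : ℕ} {Us : ℕ → Matrix (Fin n) (Fin n) ℝ} (hU : ∀ k, Us k * (Us k)ᵀ = 1) :
    ∃ (U : Matrix (Fin n) (Fin n) ℝ) (φ : ℕ → ℕ), U * Uᵀ = 1 ∧ StrictMono φ ∧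
      Tendsto (fun k => Us (φ k)) atTop (𝓝 U) := by
  have hfc : FirstCountableTopology (Matrix (Fin n) (Fin n) ℝ) :=
    inferInstanceAs (FirstCountableTopology (Fin n → Fin n → ℝ))
  obtain ⟨U, hUm, φ, hφ, hlim⟩ := (isCompact_orth n).tendsto_subseq hU
  exact ⟨U, φ, hUm, hφ, hlim⟩

/-- Convergence of diagonalizations. -/
lemma diag_limit {n : ℕ} {Us : ℕ → Matrix (Fin n) (Fin n) ℝ} {xs : ℕ → Fin n → ℝ}
    {U : Matrix (Fin n) (Fin n) ℝ} {A : Sym n}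
    (hUs : ∀ k, Us k * (Us k)ᵀ = 1) (hU : U * Uᵀ = 1) (hlim : Tendsto Us atTop (𝓝 U))
    (hA : Tendsto (fun k => cjD (Us k) (xs k)) atTop (𝓝 A)) :
    ∃ x, Tendsto xs atTop (𝓝 x) ∧ A = cjD U x := by
  have hA' : Tendsto (fun k => (cjD (Us k) (xs k) : Matrix (Fin n) (Fin n) ℝ)) atTop
      (𝓝 (A : Matrix (Fin n) (Fin n) ℝ)) := (continuous_subtype_val.tendsto A).comp hA
  have hT : Tendsto (fun k => (Us k)ᵀ) atTop (𝓝 Uᵀ) :=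
    (continuous_id.matrix_transpose.tendsto U).comp hlim
  have h1 := (hT.mul hA').mul hlim
  have h2 : ∀ k, (Us k)ᵀ * (cjD (Us k) (xs k) : Matrix (Fin n) (Fin n) ℝ) * Us k
      = Matrix.diagonal (xs k) := by
    intro k
    calc _ = ((Us k)ᵀ * Us k) * Matrix.diagonal (xs k) * ((Us k)ᵀ * Us k) := by
          simp only [cjD_val, Matrix.mul_assoc]
      _ = _ := by rw [orth_comm (hUs k), Matrix.one_mul, Matrix.mul_one]
  simp_rw [h2] at h1
  have hx : Tendsto xs atTop (𝓝 (Matrix.diag (Uᵀ * (A : Matrix (Fin n) (Fin n) ℝ) * U))) := by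
    have := (continuous_id.matrix_diag.tendsto _).comp h1
    simpa [Function.comp_def] using this
  refine ⟨_, hx, ?_⟩
  have h3 := tendsto_nhds_unique h1 ((continuous_id.matrix_diagonal.tendsto _).comp hx)
  apply Subtype.ext
  rw [cjD_val]
  have h3' : Matrix.diagonal (Matrix.diag (Uᵀ * (A : Matrix (Fin n) (Fin n) ℝ) * U))
      = Uᵀ * (A : Matrix (Fin n) (Fin n) ℝ) * U := h3.symm
  rw [h3']
  calc (A : Matrix (Fin n) (Fin n) ℝ) = (U * Uᵀ) * A * (U * Uᵀ) := by
        rw [hU, Matrix.one_mul, Matrix.mul_one]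
    _ = _ := by simp only [Matrix.mul_assoc]

lemma lim_decomp {n : ℕ} {θ : (Fin n → ℝ) → EReal} (hsym : SymmetricFn θ) {A B : Sym n}
    (h : LimSubgrad ipM (specFn θ) A B) :
    ∃ (U : Matrix (Fin n) (Fin n) ℝ) (x v : Fin n → ℝ), U * Uᵀ = 1 ∧ A = cjD U x ∧
      B = cjD U v ∧ LimSubgrad ipV θ x v := by
  obtain ⟨As, Bs, hreg, hA, hB, hf⟩ := h
  choose Us xs vs hUs hAs hBs hθ using fun k => reg_decomp hsym (hreg k)
  obtain ⟨U, φ, hU, hφ, hlim⟩ := orth_subseq hUs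
  have hA' := hA.comp hφ.tendsto_atTop
  have hB' := hB.comp hφ.tendsto_atTop
  have hf' := hf.comp hφ.tendsto_atTop
  simp only [Function.comp_def] at hA' hB' hf'
  simp_rw [hAs] at hA' hf'
  simp_rw [hBs] at hB'
  obtain ⟨x, hx, hAx⟩ := diag_limit (fun k => hUs (φ k)) hU hlim hA'
  obtain ⟨v, hv, hBv⟩ := diag_limit (fun k => hUs (φ k)) hU hlim hB'
  refine ⟨U, x, v, hU, hAx, hBv, fun k => xs (φ k), fun k => vs (φ k), fun k => hθ _, hx, hv, ?_⟩
  rw [hAx, specFn_cjD hsym hU] at hf'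
  refine hf'.congr fun k => ?_
  exact specFn_cjD hsym (hUs _) _

lemma lim_lift {n : ℕ} {θ : (Fin n → ℝ) → EReal} (hsym : SymmetricFn θ)
    {U : Matrix (Fin n) (Fin n) ℝ} (hU : U * Uᵀ = 1) {x v : Fin n → ℝ}
    (h : LimSubgrad ipV θ x v) : LimSubgrad ipM (specFn θ) (cjD U x) (cjD U v) := by
  obtain ⟨xs, vs, hreg, hx, hv, hf⟩ := h
  have hc : Continuous fun y : Fin n → ℝ => cjD U y :=
    continuous_cjD.comp (continuous_const.prodMk continuous_id)
  refine ⟨fun k => cjD U (xs k), fun k => cjD U (vs k), fun k => reg_lift hsym hU (hreg k),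
    (hc.tendsto x).comp hx, (hc.tendsto v).comp hv, ?_⟩
  simp_rw [specFn_cjD hsym hU]
  exact hf

/-- The permutation matrix moving `x ∘ σ` to `x`. -/
def pmat {n : ℕ} (σ : Equiv.Perm (Fin n)) : Matrix (Fin n) (Fin n) ℝ :=
  Matrix.of fun i j => if i = σ j then 1 else 0

lemma pmat_diag {n : ℕ} (σ : Equiv.Perm (Fin n)) (x : Fin n → ℝ) :
    pmat σ * Matrix.diagonal (fun i => x (σ i)) * (pmat σ)ᵀ = Matrix.diagonal x := by
  ext i k
  rw [Matrix.mul_apply]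
  simp only [Matrix.mul_diagonal, pmat, Matrix.transpose_apply, Matrix.of_apply]
  rw [← Equiv.sum_comp σ.symm]
  simp only [Matrix.diagonal_apply, Equiv.apply_symm_apply]
  by_cases h : i = k
  · subst h; simp
  · simp [h]

lemma pmat_orth {n : ℕ} (σ : Equiv.Perm (Fin n)) : pmat σ * (pmat σ)ᵀ = 1 := by
  have := pmat_diag σ (fun _ => 1)
  simpa using this

lemma cjD_pmat {n : ℕ} (U : Matrix (Fin n) (Fin n) ℝ) (σ : Equiv.Perm (Fin n)) (x : Fin n → ℝ) :
    cjD (U * pmat σ) (fun i => x (σ i)) = cjD U x := by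
  apply Subtype.ext
  rw [cjD_mul, cjD_val, cjD_val, pmat_diag]

lemma lim_perm {n : ℕ} {θ : (Fin n → ℝ) → EReal} (hsym : SymmetricFn θ)
    (σ : Equiv.Perm (Fin n)) {x v : Fin n → ℝ}
    (h : LimSubgrad ipV θ x v) : LimSubgrad ipV θ (fun i => x (σ i)) (fun i => v (σ i)) := by
  obtain ⟨xs, vs, hreg, hx, hv, hf⟩ := h
  have hc : Continuous fun y : Fin n → ℝ => fun i => y (σ i) := by fun_prop
  refine ⟨fun k i => xs k (σ i), fun k i => vs k (σ i), fun k => ?_,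
    (hc.tendsto x).comp hx, (hc.tendsto v).comp hv, ?_⟩
  · have h1 : (1 : Matrix (Fin n) (Fin n) ℝ) * (1 : Matrix (Fin n) (Fin n) ℝ)ᵀ = 1 := by simp
    have := reg_lift hsym h1 (hreg k)
    rw [← cjD_pmat 1 σ, ← cjD_pmat 1 σ] at this
    exact reg_drop hsym (orth_mul h1 (pmat_orth σ)) this
  · simp_rw [hsym _ σ]
    exact hf


/-! ### Part 4: tangent vectors to the graph -/

lemma entry_analysis {n : ℕ} {V F : ℕ → Matrix (Fin n) (Fin n) ℝ} {xk : ℕ → Fin n → ℝ}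
    {x : Fin n → ℝ} {t : ℕ → ℝ} {G : Matrix (Fin n) (Fin n) ℝ} (ht : ∀ k, 0 < t k)
    (hV : Tendsto V atTop (𝓝 1)) (hF : Tendsto F atTop (𝓝 G)) (hx : Tendsto xk atTop (𝓝 x))
    (heq : ∀ k i j, V k i j * (xk k j - x i) = t k * F k i j) :
    (∀ j, Tendsto (fun k => (t k)⁻¹ * (xk k j - x j)) atTop (𝓝 (G j j))) ∧
    (∀ i j, i ≠ j → x i = x j → G i j = 0) ∧
    (∀ i j, x i ≠ x j → Tendsto (fun k => (t k)⁻¹ * V k i j) atTop (𝓝 (G i j / (x j - x i)))) := by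
  have hV' : ∀ i j, Tendsto (fun k => V k i j) atTop (𝓝 ((1 : Matrix (Fin n) (Fin n) ℝ) i j)) :=
    fun i j => tendsto_pi_nhds.mp (tendsto_pi_nhds.mp hV i) j
  have hF' : ∀ i j, Tendsto (fun k => F k i j) atTop (𝓝 (G i j)) :=
    fun i j => tendsto_pi_nhds.mp (tendsto_pi_nhds.mp hF i) j
  have hx' : ∀ j, Tendsto (fun k => xk k j) atTop (𝓝 (x j)) := fun j => tendsto_pi_nhds.mp hx j
  have hFe : ∀ k i j, F k i j = (t k)⁻¹ * (V k i j * (xk k j - x i)) := by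
    intro k i j
    rw [heq, ← mul_assoc, inv_mul_cancel₀ (ht k).ne', one_mul]
  have ha : ∀ j, Tendsto (fun k => (t k)⁻¹ * (xk k j - x j)) atTop (𝓝 (G j j)) := by
    intro j
    have h1 : Tendsto (fun k => V k j j) atTop (𝓝 1) := by
      have := hV' j j
      rwa [Matrix.one_apply_eq] at this
    have h2 := (hF' j j).div h1 one_ne_zero
    rw [div_one] at h2
    refine h2.congr' ?_
    filter_upwards [h1.eventually_ne one_ne_zero] with k hk
    rw [Pi.div_apply, hFe]
    field_simp
  refine ⟨ha, fun i j hij hxij => ?_, fun i j hxij => ?_⟩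
  · have h1 : Tendsto (fun k => V k i j) atTop (𝓝 0) := by
      have := hV' i j
      rwa [Matrix.one_apply_ne hij] at this
    have h2 := h1.mul (ha j)
    rw [zero_mul] at h2
    refine tendsto_nhds_unique ((hF' i j).congr fun k => ?_) h2
    rw [hFe, hxij]; ring
  · have h1 : Tendsto (fun k => xk k j - x i) atTop (𝓝 (x j - x i)) :=
      (hx' j).sub tendsto_const_nhds
    have hne : x j - x i ≠ 0 := sub_ne_zero.mpr (Ne.symm hxij)
    refine ((hF' i j).div h1 hne).congr' ?_
    filter_upwards [h1.eventually_ne hne] with k hk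
    rw [Pi.div_apply, hFe]
    field_simp

lemma core_entry {n : ℕ} {Us : ℕ → Matrix (Fin n) (Fin n) ℝ} {Q : Matrix (Fin n) (Fin n) ℝ}
    {t : ℕ → ℝ} {x : Fin n → ℝ} {xs : ℕ → Fin n → ℝ} {Ws : ℕ → Sym n}
    (hUs : ∀ k, Us k * (Us k)ᵀ = 1) (hQ : Q * Qᵀ = 1)
    (h : ∀ k, cjD Q x + t k • Ws k = cjD (Us k) (xs k)) (k : ℕ) (i j : Fin n) :
    (Qᵀ * Us k) i j * (xs k j - x i)
      = t k * (Qᵀ * (Ws k : Matrix (Fin n) (Fin n) ℝ) * Us k) i j := by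
  have h1 : Q * Matrix.diagonal x * Qᵀ + t k • (Ws k : Matrix (Fin n) (Fin n) ℝ)
      = Us k * Matrix.diagonal (xs k) * (Us k)ᵀ := congrArg Subtype.val (h k)
  have h2 : Matrix.diagonal x * (Qᵀ * Us k)
        + t k • (Qᵀ * (Ws k : Matrix (Fin n) (Fin n) ℝ) * Us k)
      = (Qᵀ * Us k) * Matrix.diagonal (xs k) := by
    calc _ = (Qᵀ * Q) * Matrix.diagonal x * (Qᵀ * Us k)
          + t k • (Qᵀ * (Ws k : Matrix (Fin n) (Fin n) ℝ) * Us k) := by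
          rw [orth_comm hQ, Matrix.one_mul]
      _ = Qᵀ * (Q * Matrix.diagonal x * Qᵀ + t k • (Ws k : Matrix (Fin n) (Fin n) ℝ)) * Us k := by
          rw [Matrix.mul_add, Matrix.add_mul, Matrix.mul_smul, Matrix.smul_mul]
          simp only [Matrix.mul_assoc]
      _ = (Qᵀ * Us k) * Matrix.diagonal (xs k) * ((Us k)ᵀ * Us k) := by
          rw [h1]; simp only [Matrix.mul_assoc]
      _ = _ := by rw [orth_comm (hUs k), Matrix.mul_one]
  have h3 := congrFun (congrFun h2 i) j
  rw [Matrix.add_apply, Matrix.diagonal_mul, Matrix.mul_diagonal, Matrix.smul_apply,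
    smul_eq_mul] at h3
  linarith

lemma conj_symm {n : ℕ} (Q : Matrix (Fin n) (Fin n) ℝ) (W : Sym n) (i j : Fin n) :
    (Qᵀ * (W : Matrix (Fin n) (Fin n) ℝ) * Q) i j
      = (Qᵀ * (W : Matrix (Fin n) (Fin n) ℝ) * Q) j i := by
  have hW : (W : Matrix (Fin n) (Fin n) ℝ)ᵀ = W := W.2
  have : (Qᵀ * (W : Matrix (Fin n) (Fin n) ℝ) * Q)ᵀ
      = Qᵀ * (W : Matrix (Fin n) (Fin n) ℝ) * Q := by
    rw [Matrix.transpose_mul, Matrix.transpose_mul, Matrix.transpose_transpose, hW,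
      Matrix.mul_assoc]
  exact congrFun (congrFun this.symm i) j

lemma core {n : ℕ} {θ : (Fin n → ℝ) → EReal} (hsym : SymmetricFn θ) {x y : Fin n → ℝ}
    {U : Matrix (Fin n) (Fin n) ℝ} (hU : U * Uᵀ = 1) {t : ℕ → ℝ} (ht : ∀ k, 0 < t k)
    (ht0 : Tendsto t atTop (𝓝 0)) {Ws Hs : ℕ → Sym n} {W H : Sym n}
    (hW : Tendsto Ws atTop (𝓝 W)) (hH : Tendsto Hs atTop (𝓝 H))
    (hmem : ∀ k, LimSubgrad ipM (specFn θ) (cjD U x + t k • Ws k) (cjD U y + t k • Hs k)) :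
    ∃ (Q A : Matrix (Fin n) (Fin n) ℝ) (φ : ℕ → ℕ) (ws ηs : ℕ → Fin n → ℝ) (w η : Fin n → ℝ),
      Q * Qᵀ = 1 ∧ StrictMono φ ∧ cjD Q x = cjD U x ∧ cjD Q y = cjD U y ∧
      Tendsto ws atTop (𝓝 w) ∧ Tendsto ηs atTop (𝓝 η) ∧
      (∀ k, LimSubgrad ipV θ (x + t (φ k) • ws k) (y + t (φ k) • ηs k)) ∧ Aᵀ = -A ∧
      Qᵀ * (W : Matrix (Fin n) (Fin n) ℝ) * Q
        = Matrix.diagonal w + A * Matrix.diagonal x - Matrix.diagonal x * A ∧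
      Qᵀ * (H : Matrix (Fin n) (Fin n) ℝ) * Q
        = Matrix.diagonal η + A * Matrix.diagonal y - Matrix.diagonal y * A := by
  choose Us xs ys hUs hXs hYs hθ using fun k => lim_decomp hsym (hmem k)
  obtain ⟨Q₀, φ, hQ₀, hφ, hlim⟩ := orth_subseq hUs
  have lim1 : ∀ (z : Fin n → ℝ) (Zs : ℕ → Sym n) (Z : Sym n), Tendsto Zs atTop (𝓝 Z) →
      Tendsto (fun k => cjD U z + t (φ k) • Zs (φ k)) atTop (𝓝 (cjD U z)) := by
    intro z Zs Z hZ
    have : Tendsto (fun k => cjD U z + t k • Zs k) atTop (𝓝 (cjD U z + (0 : ℝ) • Z)) :=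
      tendsto_const_nhds.add (ht0.smul hZ)
    rw [zero_smul, add_zero] at this
    exact this.comp hφ.tendsto_atTop
  have hX1 := lim1 x Ws W hW
  have hY1 := lim1 y Hs H hH
  simp_rw [hXs] at hX1
  simp_rw [hYs] at hY1
  obtain ⟨x', hx', hXx'⟩ := diag_limit (fun k => hUs (φ k)) hQ₀ hlim hX1
  obtain ⟨y', hy', hYy'⟩ := diag_limit (fun k => hUs (φ k)) hQ₀ hlim hY1
  obtain ⟨σ, hσ⟩ := perm_of_det_ne (orth_det_ne (orth_mul (orth_transpose hU) hQ₀))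
  have hxσ : ∀ j, x (σ j) = x' j := fun j =>
    entry_eq (intertwine hU hQ₀ (congrArg Subtype.val hXx')) (hσ j)
  have hyσ : ∀ j, y (σ j) = y' j := fun j =>
    entry_eq (intertwine hU hQ₀ (congrArg Subtype.val hYy')) (hσ j)
  let τ := σ.symm
  have hxτ : x = fun i => x' (τ i) := by
    funext i; rw [← hxσ]; simp [τ]
  have hyτ : y = fun i => y' (τ i) := by
    funext i; rw [← hyσ]; simp [τ]
  set Q := Q₀ * pmat τ with hQdef
  have hQ : Q * Qᵀ = 1 := orth_mul hQ₀ (pmat_orth τ)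
  have hQx : cjD Q x = cjD U x := by
    rw [hXx', hQdef]; conv_lhs => rw [hxτ]
    exact cjD_pmat _ _ _
  have hQy : cjD Q y = cjD U y := by
    rw [hYy', hQdef]; conv_lhs => rw [hyτ]
    exact cjD_pmat _ _ _
  -- permuted data
  let Vs : ℕ → Matrix (Fin n) (Fin n) ℝ := fun k => Us (φ k) * pmat τ
  let xk : ℕ → Fin n → ℝ := fun k i => xs (φ k) (τ i)
  let yk : ℕ → Fin n → ℝ := fun k i => ys (φ k) (τ i)
  have hVs : ∀ k, Vs k * (Vs k)ᵀ = 1 := fun k => orth_mul (hUs _) (pmat_orth τ)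
  have hVlim : Tendsto Vs atTop (𝓝 Q) := hlim.mul tendsto_const_nhds
  have hperm : Continuous fun z : Fin n → ℝ => fun i => z (τ i) := by fun_prop
  have hxk : Tendsto xk atTop (𝓝 x) := by
    have := (hperm.tendsto x').comp hx'
    rw [← hxτ] at this
    exact this
  have hyk : Tendsto yk atTop (𝓝 y) := by
    have := (hperm.tendsto y').comp hy'
    rw [← hyτ] at this
    exact this
  have ex : ∀ k, cjD Q x + t (φ k) • Ws (φ k) = cjD (Vs k) (xk k) := by
    intro k; rw [hQx, hXs]; exact (cjD_pmat _ _ _).symm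
  have ey : ∀ k, cjD Q y + t (φ k) • Hs (φ k) = cjD (Vs k) (yk k) := by
    intro k; rw [hQy, hYs]; exact (cjD_pmat _ _ _).symm
  have hV1 : Tendsto (fun k => Qᵀ * Vs k) atTop (𝓝 1) := by
    have := (tendsto_const_nhds (x := Qᵀ)).mul hVlim
    rwa [orth_comm hQ] at this
  have limF : ∀ (Zs : ℕ → Sym n) (Z : Sym n), Tendsto Zs atTop (𝓝 Z) →
      Tendsto (fun k => Qᵀ * (Zs (φ k) : Matrix (Fin n) (Fin n) ℝ) * Vs k) atTop
        (𝓝 (Qᵀ * (Z : Matrix (Fin n) (Fin n) ℝ) * Q)) := by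
    intro Zs Z hZ
    have h1 : Tendsto (fun k => (Zs (φ k) : Matrix (Fin n) (Fin n) ℝ)) atTop
        (𝓝 (Z : Matrix (Fin n) (Fin n) ℝ)) :=
      ((continuous_subtype_val.tendsto Z).comp hZ).comp hφ.tendsto_atTop
    exact ((tendsto_const_nhds (x := Qᵀ)).mul h1).mul hVlim
  obtain ⟨ax, bx, cx⟩ := entry_analysis (t := fun k => t (φ k)) (fun k => ht _) hV1
    (limF Ws W hW) hxk (core_entry hVs hQ ex)
  obtain ⟨ay, bY, cy⟩ := entry_analysis (t := fun k => t (φ k)) (fun k => ht _) hV1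
    (limF Hs H hH) hyk (core_entry hVs hQ ey)
  set F := Qᵀ * (W : Matrix (Fin n) (Fin n) ℝ) * Q with hFdef
  set G := Qᵀ * (H : Matrix (Fin n) (Fin n) ℝ) * Q with hGdef
  have hFs : ∀ i j, F i j = F j i := conj_symm Q W
  have hGs : ∀ i j, G i j = G j i := conj_symm Q H
  classical
  let A : Matrix (Fin n) (Fin n) ℝ := Matrix.of fun i j =>
    if x i ≠ x j then F i j / (x j - x i) else if y i ≠ y j then G i j / (y j - y i) else 0
  refine ⟨Q, A, φ, fun k => (t (φ k))⁻¹ • (xk k - x), fun k => (t (φ k))⁻¹ • (yk k - y),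
    fun j => F j j, fun j => G j j, hQ, hφ, hQx, hQy, tendsto_pi_nhds.mpr ax,
    tendsto_pi_nhds.mpr ay, fun k => ?_, ?_, ?_, ?_⟩
  · rw [smul_inv_smul₀ (ht _).ne', smul_inv_smul₀ (ht _).ne', add_sub_cancel, add_sub_cancel]
    exact lim_perm hsym τ (hθ (φ k))
  · ext i j
    simp only [Matrix.transpose_apply, Matrix.neg_apply, A, Matrix.of_apply]
    by_cases h1 : x i = x j
    · by_cases h2 : y i = y j
      · simp [h1, h2]
      · rw [if_neg (by simp [h1]), if_pos (Ne.symm h2), if_neg (by simp [h1]), if_pos h2, hGs j i,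
          ← div_neg, neg_sub]
    · rw [if_pos (Ne.symm h1), if_pos h1, hFs j i, ← div_neg, neg_sub]
  · ext i j
    rw [Matrix.sub_apply, Matrix.add_apply, Matrix.mul_diagonal, Matrix.diagonal_mul]
    by_cases hij : i = j
    · subst hij
      rw [Matrix.diagonal_apply_eq]; ring
    rw [Matrix.diagonal_apply_ne _ hij]
    simp only [A, Matrix.of_apply]
    by_cases h1 : x i = x j
    · refine (bx i j hij h1).trans ?_
      rw [h1]; ring
    · rw [if_pos h1]
      have : x j - x i ≠ 0 := sub_ne_zero.mpr (Ne.symm h1)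
      field_simp
      ring
  · ext i j
    rw [Matrix.sub_apply, Matrix.add_apply, Matrix.mul_diagonal, Matrix.diagonal_mul]
    by_cases hij : i = j
    · subst hij
      rw [Matrix.diagonal_apply_eq]; ring
    rw [Matrix.diagonal_apply_ne _ hij]
    simp only [A, Matrix.of_apply]
    by_cases h2 : y i = y j
    · refine (bY i j hij h2).trans ?_
      rw [h2]; ring
    · have : y j - y i ≠ 0 := sub_ne_zero.mpr (Ne.symm h2)
      have hA : (if x i ≠ x j then F i j / (x j - x i) else
          if y i ≠ y j then G i j / (y j - y i) else 0) = G i j / (y j - y i) := by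
        by_cases h1 : x i = x j
        · rw [if_neg (by simp [h1]), if_pos h2]
        · rw [if_pos h1]
          exact tendsto_nhds_unique (cx i j h1) (cy i j h2)
      rw [hA]
      field_simp
      ring

/-- Lifting a convergent sequence of difference quotients to matrices. -/
lemma lift_tendsto {n : ℕ} {Q A : Matrix (Fin n) (Fin n) ℝ} (hQ : Q * Qᵀ = 1) (hA : Aᵀ = -A)
    {t : ℕ → ℝ} (ht : ∀ k, 0 < t k) (ht0 : Tendsto t atTop (𝓝 0))
    {E : ℕ → Matrix (Fin n) (Fin n) ℝ} (hE1 : Tendsto E atTop (𝓝 1))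
    (hEA : Tendsto (fun k => (t k)⁻¹ • (E k - 1)) atTop (𝓝 A))
    {x w : Fin n → ℝ} {ws : ℕ → Fin n → ℝ} (hws : Tendsto ws atTop (𝓝 w)) {W : Sym n}
    (hW : Qᵀ * (W : Matrix (Fin n) (Fin n) ℝ) * Q
        = Matrix.diagonal w + A * Matrix.diagonal x - Matrix.diagonal x * A) :
    Tendsto (fun k => (t k)⁻¹ • (cjD (Q * E k) (x + t k • ws k) - cjD Q x)) atTop (𝓝 W) := by
  rw [tendsto_subtype_rng]
  have h1 : Tendsto (fun k => Matrix.diagonal (x + t k • ws k)) atTop (𝓝 (Matrix.diagonal x)) := by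
    have : Tendsto (fun k => x + t k • ws k) atTop (𝓝 (x + (0 : ℝ) • w)) :=
      tendsto_const_nhds.add (ht0.smul hws)
    rw [zero_smul, add_zero] at this
    exact (continuous_id.matrix_diagonal.tendsto x).comp this
  have h2 : Tendsto (fun k => (t k)⁻¹ • (Matrix.diagonal (x + t k • ws k) - Matrix.diagonal x))
      atTop (𝓝 (Matrix.diagonal w)) := by
    refine ((continuous_id.matrix_diagonal.tendsto w).comp hws).congr fun k => ?_
    ext i j
    by_cases hij : i = j
    · subst hij
      simp [(ht k).ne']
    · simp [Matrix.diagonal_apply_ne _ hij]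
  have h3 := conj_expand hE1 hEA h1 h2
  have h4 := ((tendsto_const_nhds (x := Q)).mul h3).mul (tendsto_const_nhds (x := Qᵀ))
  have h5 : Q * (Matrix.diagonal w + A * Matrix.diagonal x + Matrix.diagonal x * Aᵀ) * Qᵀ = W := by
    rw [hA, Matrix.mul_neg, ← sub_eq_add_neg, ← hW]
    calc _ = (Q * Qᵀ) * (W : Matrix (Fin n) (Fin n) ℝ) * (Q * Qᵀ) := by
          simp only [Matrix.mul_assoc]
      _ = _ := by rw [hQ, Matrix.one_mul, Matrix.mul_one]
  rw [h5] at h4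
  refine h4.congr fun k => ?_
  simp only [Submodule.coe_smul, Submodule.coe_sub, cjD_val]
  rw [Matrix.mul_smul, Matrix.smul_mul, Matrix.mul_sub, Matrix.sub_mul, Matrix.transpose_mul]
  simp only [Matrix.mul_assoc]

lemma seq_of_subseq {α : Type*} [PseudoMetricSpace α] {S : ℕ → Set α} (hS : ∀ k, (S k).Nonempty)
    {p : α} (h : ∀ ns : ℕ → ℕ, Tendsto ns atTop atTop → ∃ (ms : ℕ → ℕ) (q : ℕ → α),
      (∀ k, q k ∈ S (ns (ms k))) ∧ Tendsto q atTop (𝓝 p)) :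
    ∃ q : ℕ → α, (∀ k, q k ∈ S k) ∧ Tendsto q atTop (𝓝 p) := by
  have hinf : Tendsto (fun k => Metric.infDist p (S k)) atTop (𝓝 0) := by
    refine tendsto_of_subseq_tendsto fun ns hns => ?_
    obtain ⟨ms, q, hq, hlim⟩ := h ns hns
    refine ⟨ms, squeeze_zero (fun k => Metric.infDist_nonneg)
      (fun k => Metric.infDist_le_dist_of_mem (hq k)) ?_⟩
    have := (tendsto_iff_dist_tendsto_zero.mp hlim)
    simpa [dist_comm] using this
  have hex : ∀ k : ℕ, ∃ q ∈ S k, dist p q < Metric.infDist p (S k) + 1 / ((k : ℝ) + 1) := by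
    intro k
    apply (Metric.infDist_lt_iff (hS k)).mp
    have : (0 : ℝ) < 1 / ((k : ℝ) + 1) := by positivity
    linarith
  choose q hq hd using hex
  refine ⟨q, hq, tendsto_iff_dist_tendsto_zero.mpr ?_⟩
  have hz := hinf.add (tendsto_one_div_add_atTop_nhds_zero_nat (𝕜 := ℝ))
  rw [add_zero] at hz
  refine squeeze_zero (fun k => dist_nonneg) (fun k => ?_) hz
  rw [dist_comm]
  exact (hd k).le

lemma block_diag {n : ℕ} {R A : Matrix (Fin n) (Fin n) ℝ} {x w w' : Fin n → ℝ} (hRo : R * Rᵀ = 1)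
    (hR : Matrix.diagonal x * R = R * Matrix.diagonal x)
    (h : Rᵀ * Matrix.diagonal w * R
      = Matrix.diagonal w' + A * Matrix.diagonal x - Matrix.diagonal x * A) :
    Matrix.diagonal w * R = R * Matrix.diagonal w' := by
  have h1 : Rᵀ * Matrix.diagonal w * R = Matrix.diagonal w' := by
    ext i j
    have hij := congrFun (congrFun h i) j
    rw [Matrix.sub_apply, Matrix.add_apply, Matrix.mul_diagonal, Matrix.diagonal_mul] at hij
    by_cases hx : x i = x j
    · rw [hij, hx]; ring
    · have hne : i ≠ j := fun h => hx (by rw [h])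
      rw [Matrix.diagonal_apply_ne _ hne, Matrix.mul_apply]
      refine Finset.sum_eq_zero fun l _ => ?_
      rw [Matrix.mul_diagonal, Matrix.transpose_apply]
      by_cases hl : R l i = 0
      · rw [hl]; ring
      · by_cases hl' : R l j = 0
        · rw [hl']; ring
        · exact absurd ((entry_eq hR hl).symm.trans (entry_eq hR hl')) hx
  calc Matrix.diagonal w * R = (R * Rᵀ) * Matrix.diagonal w * R := by rw [hRo, Matrix.one_mul]
    _ = R * (Rᵀ * Matrix.diagonal w * R) := by simp only [Matrix.mul_assoc]
    _ = _ := by rw [h1]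

lemma cjD_add_smul {n : ℕ} (U : Matrix (Fin n) (Fin n) ℝ) (x w : Fin n → ℝ) (t : ℝ) :
    cjD U (x + t • w) = cjD U x + t • cjD U w := by
  apply Subtype.ext
  change U * Matrix.diagonal (x + t • w) * Uᵀ
    = U * Matrix.diagonal x * Uᵀ + t • (U * Matrix.diagonal w * Uᵀ)
  have : Matrix.diagonal (x + t • w) = Matrix.diagonal x + t • Matrix.diagonal w := by
    ext i j
    by_cases hij : i = j
    · subst hij; simp
    · simp [Matrix.diagonal_apply_ne _ hij]
  rw [this, Matrix.mul_add, Matrix.add_mul, Matrix.mul_smul, Matrix.smul_mul]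

lemma proto_of_vec {n : ℕ} {θ : (Fin n → ℝ) → EReal} (hsym : SymmetricFn θ)
    {U : Matrix (Fin n) (Fin n) ℝ} (hU : U * Uᵀ = 1) {x y : Fin n → ℝ}
    (h : ProtoDiff (fun x : Fin n → ℝ => {v : Fin n → ℝ | LimSubgrad ipV θ x v}) x y) :
    ProtoDiff (fun A : Sym n => {B : Sym n | LimSubgrad ipM (specFn θ) A B})
      (cjD U x) (cjD U y) := by
  rintro W H ⟨t, ps, ht, ht0, hlim, hmem⟩ t' ht' ht0'
  obtain ⟨Q, A, φ, ws, ηs, w, η, hQ, hφ, hQx, hQy, hw, hη, hg, hA, hWe, hHe⟩ :=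
    core hsym hU ht ht0 (x := x) (y := y) (Ws := fun k => (ps k).1) (Hs := fun k => (ps k).2)
      ((continuous_fst.tendsto (W, H)).comp hlim) ((continuous_snd.tendsto (W, H)).comp hlim)
      (fun k => hmem k)
  obtain ⟨ws', ηs', hw', hη', hg'⟩ := h w η ⟨fun k => t (φ k), fun k => (ws k, ηs k),
    fun k => ht _, ht0.comp hφ.tendsto_atTop, hw.prodMk_nhds hη, fun k => hg k⟩ t' ht' ht0'
  obtain ⟨E, hEo, hE1, hEA⟩ := exists_orth_path A hA
  have ht'' : Tendsto t' atTop (𝓝[≠] 0) :=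
    tendsto_nhdsWithin_iff.mpr ⟨ht0', Eventually.of_forall fun k => (ht' k).ne'⟩
  have hE1' : Tendsto (fun k => E (t' k)) atTop (𝓝 1) := hE1.comp ht0'
  have hEA' : Tendsto (fun k => (t' k)⁻¹ • (E (t' k) - 1)) atTop (𝓝 A) := hEA.comp ht''
  refine ⟨_, _, lift_tendsto hQ hA ht' ht0' hE1' hEA' hw' hWe,
    lift_tendsto hQ hA ht' ht0' hE1' hEA' hη' hHe, fun k => ?_⟩
  rw [smul_inv_smul₀ (ht' k).ne', smul_inv_smul₀ (ht' k).ne', hQx, hQy, add_sub_cancel,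
    add_sub_cancel]
  exact lim_lift hsym (orth_mul hQ (hEo _)) (hg' k)

lemma vec_of_proto {n : ℕ} {θ : (Fin n → ℝ) → EReal} (hsym : SymmetricFn θ)
    {U : Matrix (Fin n) (Fin n) ℝ} (hU : U * Uᵀ = 1) {x y : Fin n → ℝ}
    (hy : LimSubgrad ipV θ x y)
    (h : ProtoDiff (fun A : Sym n => {B : Sym n | LimSubgrad ipM (specFn θ) A B})
      (cjD U x) (cjD U y)) :
    ProtoDiff (fun x : Fin n → ℝ => {v : Fin n → ℝ | LimSubgrad ipV θ x v}) x y := by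
  rintro w η ⟨t, ps, ht, ht0, hlim, hmem⟩ t' ht' ht0'
  have hc : Continuous fun y : Fin n → ℝ => cjD U y :=
    continuous_cjD.comp (continuous_const.prodMk continuous_id)
  have h1 : Tendsto (fun k => (ps k).1) atTop (𝓝 w) := (continuous_fst.tendsto (w, η)).comp hlim
  have h2 : Tendsto (fun k => (ps k).2) atTop (𝓝 η) := (continuous_snd.tendsto (w, η)).comp hlim
  obtain ⟨Ws, Hs, hW, hH, hWH⟩ := h (cjD U w) (cjD U η)
    ⟨t, fun k => (cjD U (ps k).1, cjD U (ps k).2), ht, ht0,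
      ((hc.tendsto w).comp h1).prodMk_nhds ((hc.tendsto η).comp h2), fun k => by
        have := lim_lift hsym hU (hmem k)
        change LimSubgrad ipM (specFn θ) (cjD U x + t k • cjD U (ps k).1)
          (cjD U y + t k • cjD U (ps k).2)
        rw [← cjD_add_smul, ← cjD_add_smul]
        exact this⟩ t' ht' ht0'
  obtain ⟨q, hq, hql⟩ := seq_of_subseq (α := (Fin n → ℝ) × (Fin n → ℝ)) (p := (w, η))
    (S := fun k => {p | LimSubgrad ipV θ (x + t' k • p.1) (y + t' k • p.2)})
    (fun k => ⟨(0, 0), by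
      change LimSubgrad ipV θ (x + t' k • 0) (y + t' k • 0)
      rwa [smul_zero, add_zero, add_zero]⟩) (by
    intro ns hns
    obtain ⟨Q, A, φ, ws, ηs, w', η', hQ, hφ, hQx, hQy, hw, hη, hg, hA, hWe, hHe⟩ :=
      core hsym hU (t := fun k => t' (ns k)) (fun k => ht' _) (ht0'.comp hns) (x := x) (y := y)
        (hW.comp hns) (hH.comp hns) (fun k => hWH (ns k))
    have hRo : (Uᵀ * Q) * (Uᵀ * Q)ᵀ = 1 := orth_mul (orth_transpose hU) hQ
    have hRx := intertwine hU hQ (congrArg Subtype.val hQx.symm)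
    have hRy := intertwine hU hQ (congrArg Subtype.val hQy.symm)
    have conv : ∀ z : Fin n → ℝ, (Uᵀ * Q)ᵀ * Matrix.diagonal z * (Uᵀ * Q)
        = Qᵀ * (cjD U z : Matrix (Fin n) (Fin n) ℝ) * Q := by
      intro z
      rw [Matrix.transpose_mul, Matrix.transpose_transpose, cjD_val]
      simp only [Matrix.mul_assoc]
    have hRw := block_diag hRo hRx ((conv w).trans hWe)
    have hRη := block_diag hRo hRy ((conv η).trans hHe)
    obtain ⟨σ, hσ⟩ := perm_of_det_ne (orth_det_ne hRo)
    have pw : ∀ a b : Fin n → ℝ, Matrix.diagonal a * (Uᵀ * Q) = (Uᵀ * Q) * Matrix.diagonal b →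
        a = fun i => b (σ.symm i) := by
      intro a b hab
      funext i
      have := entry_eq hab (hσ (σ.symm i))
      rwa [Equiv.apply_symm_apply] at this
    have hperm : Continuous fun z : Fin n → ℝ => fun i => z (σ.symm i) := by fun_prop
    refine ⟨φ, fun k => (fun i => ws k (σ.symm i), fun i => ηs k (σ.symm i)), fun k => ?_, ?_⟩
    · have := lim_perm hsym σ.symm (hg k)
      change LimSubgrad ipV θ (x + t' (ns (φ k)) • fun i => ws k (σ.symm i))
        (y + t' (ns (φ k)) • fun i => ηs k (σ.symm i))
      convert this using 1
      · conv_lhs => rw [pw x x hRx]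
        rfl
      · conv_lhs => rw [pw y y hRy]
        rfl
    · have e1 := (hperm.tendsto w').comp hw
      have e2 := (hperm.tendsto η').comp hη
      rw [← pw w w' hRw] at e1
      rw [← pw η η' hRη] at e2
      exact e1.prodMk_nhds e2)
  exact ⟨fun k => (q k).1, fun k => (q k).2, (continuous_fst.tendsto (w, η)).comp hql,
    (continuous_snd.tendsto (w, η)).comp hql, fun k => hq k⟩

/-- Theorem 4.6: proto-differentiability of the subgradient mapping of a
spectral function. -/
theorem proto_diff_spectral {n : ℕ} (θ : (Fin n → ℝ) → EReal)
    (X Y : Sym n) (U : Matrix (Fin n) (Fin n) ℝ) (y : Fin n → ℝ)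
    (hsym : SymmetricFn θ) (hLip : LocLipRelDom ipV θ)
    (hlsc : LowerSemicontinuous (specFn θ))
    (hY : LimSubgrad ipM (specFn θ) X Y)
    (hpr : ProxRegularAt ipM (specFn θ) X)
    (hsc : SubdiffContAt ipM (specFn θ) X)
    (hy : LimSubgrad ipV θ (eigval X.val) y)
    (hU : U ∈ eigOrth X.val)
    (hYdec : Y.val = U * Matrix.diagonal y * Uᵀ) :
    ProtoDiff (fun A : Sym n => {B : Sym n | LimSubgrad ipM (specFn θ) A B}) X Y ↔
      ProtoDiff (fun x : Fin n → ℝ => {v : Fin n → ℝ | LimSubgrad ipV θ x v})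
        (eigval X.val) y := by
  have hUo : U * Uᵀ = 1 := hU.1
  have hX' : X = cjD U (eigval X.val) := Subtype.ext hU.2
  have hY' : Y = cjD U y := Subtype.ext hYdec
  clear hpr hsc hlsc hLip hY hYdec hU
  generalize eigval X.val = x at *
  subst hX' hY'
  exact ⟨fun h => vec_of_proto hsym hUo hy h, fun h => proto_of_vec hsym hUo h⟩

end SpecPaper
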